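/- arXiv:2203.06005 — 4 statements merged into one kernel-verified Lean document; each statement's English description precedes it below -/
import Mathlib

section
/- Let K be a field, let S be a family of cardinality ℵ1 of pairwise almost disjoint infinite subsets of ω, and let R′ be the K-subalgebra of K^ω generated as a K-linear subspace by B ∪ C ∪ {1}, where 1 is the unit of K^ω, B is the canonical basis of K^{(ω)}, and C is the set of characteristic functions of the sets in S. Then R′ is a semiartinian von Neumann regular ring with primitive factors artinian of Loewy length 3, whose layers are L_0 ≅ K^{(ω)}, L_1 ≅ K^{(ω_1)} (as rings without unit, direct sums of copies of K), and L_2 ≅ K; moreover R′ is not right hereditary. -/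
set_option synthInstance.maxHeartbeats 1000000
set_option maxHeartbeats 2000000


universe u

open Submodule Function

/-- The socle of a module: the supremum of all simple submodules. -/
def moduleSocle (R : Type*) (M : Type*) [Ring R] [AddCommGroup M] [Module R M] :
    Submodule R M :=
  sSup {W : Submodule R M | IsSimpleModule R ↥W}

/-- A ring is right semiartinian if every nonzero quotient of the right module `R_R`
has a nonzero socle. -/
def IsRightSemiartinian (R : Type u) [Ring R] : Prop :=
  ∀ I : Submodule Rᵐᵒᵖ R, I ≠ ⊤ → moduleSocle Rᵐᵒᵖ (R ⧸ I) ≠ ⊥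

/-- The right socle sequence of a ring: `S_0 = 0`, `S_{α+1}/S_α = Soc(R/S_α)`,
and unions at limits. -/
noncomputable def socleSeq (R : Type u) [Ring R] : Ordinal.{u} → Submodule Rᵐᵒᵖ R :=
  fun o => Ordinal.limitRecOn o ⊥
    (fun _ S => Submodule.comap S.mkQ (moduleSocle Rᵐᵒᵖ (R ⧸ S)))
    (fun o _ ih => ⨆ (β : Ordinal.{u}) (h : β < o), ih β h)

/-- `S_α`, viewed as a submodule of `S_{α+1}`; the kernel of the `α`-th layer
epimorphism `π_α : S_{α+1} → S_{α+1}/S_α`. -/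
noncomputable def layerKer (R : Type u) [Ring R] (α : Ordinal.{u}) :
    Submodule Rᵐᵒᵖ ↥(socleSeq R (α + 1)) :=
  (socleSeq R α).comap (socleSeq R (α + 1)).subtype

/-- The `α`-th layer `L_α = S_{α+1}/S_α` of a ring. -/
noncomputable abbrev Layer (R : Type u) [Ring R] (α : Ordinal.{u}) :=
  ↥(socleSeq R (α + 1)) ⧸ layerKer R α

/-- A module `M` is weakly `R`-projective if for each `0 < α ≤ σ`, every homomorphism
`f : M → L_α` with finitely generated image factors through the `α`-th layer
epimorphism `π_α : S_{α+1} → L_α`. -/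
def WeaklyRProjective (R : Type u) [Ring R] (σ : Ordinal.{u})
    (M : Type u) [AddCommGroup M] [Module Rᵐᵒᵖ M] : Prop :=
  ∀ α : Ordinal.{u}, 0 < α → α ≤ σ →
    ∀ f : M →ₗ[Rᵐᵒᵖ] Layer R α, (LinearMap.range f).FG →
      ∃ g : M →ₗ[Rᵐᵒᵖ] ↥(socleSeq R (α + 1)), (layerKer R α).mkQ ∘ₗ g = f

/-- A ring is von Neumann regular if each `r` admits `s` with `r * s * r = r`. -/
def IsVNRegular (R : Type u) [Ring R] : Prop :=
  ∀ r : R, ∃ s : R, r * s * r = r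

/-- The annihilator of a right `R`-module, as a submodule of the right module `R_R`. -/
def rightAnnihilator (R : Type u) [Ring R] (M : Type u) [AddCommGroup M]
    [Module Rᵐᵒᵖ M] : Submodule Rᵐᵒᵖ R where
  carrier := {r : R | ∀ m : M, MulOpposite.op r • m = 0}
  add_mem' := by
    intro a b ha hb m
    rw [MulOpposite.op_add, add_smul, ha m, hb m, add_zero]
  zero_mem' := by
    intro m
    rw [MulOpposite.op_zero, zero_smul]
  smul_mem' := by
    intro c r hr m
    have h : MulOpposite.op (c • r) = c * MulOpposite.op r := by
      rw [MulOpposite.smul_eq_mul_unop, MulOpposite.op_mul, MulOpposite.op_unop]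
    rw [h, mul_smul, hr m, smul_zero]

/-- A ring has (right) primitive factors artinian if, for each right primitive
(two-sided) ideal `P`, i.e. the annihilator of a simple right module, the factor
`R/P` is (right) artinian. -/
def HasPFA (R : Type u) [Ring R] : Prop :=
  ∀ (M : Type u) [AddCommGroup M] [Module Rᵐᵒᵖ M], IsSimpleModule Rᵐᵒᵖ M →
    IsArtinian Rᵐᵒᵖ (R ⧸ rightAnnihilator R M)

/-- The additive equivalence `φ` from the layer `L_α = S_{α+1}/S_α` of `R` to a
(non-unital) ring `A` respects the multiplication induced from `R`: note that for
`x, y ∈ S_{α+1}` the product `x * y` equals `op y • x ∈ S_{α+1}`.  Together with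
additivity this says that `φ` is an isomorphism of rings without unit. -/
def RespectsLayerMul (R : Type u) [Ring R] (α : Ordinal.{u}) {A : Type u} [Mul A] [Add A]
    (φ : Layer R α ≃+ A) : Prop :=
  ∀ x y : ↥(socleSeq R (α + 1)),
    φ (Submodule.Quotient.mk (MulOpposite.op (y : R) • x)) =
      φ (Submodule.Quotient.mk x) * φ (Submodule.Quotient.mk y)

namespace ADAux

section comm
variable {K : Type u} [Field K] {R : Type u} [CommRing R] [Algebra K R]

lemma op_smul_mk (I : Submodule Rᵐᵒᵖ R) (r : Rᵐᵒᵖ) (x : R) :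
    r • I.mkQ x = I.mkQ (x * r.unop) := by
  rw [← map_smul]; rfl

lemma mul_mem_right' (I : Submodule Rᵐᵒᵖ R) {x : R} (r : R) (hx : x ∈ I) : x * r ∈ I :=
  I.smul_mem (MulOpposite.op r) hx

lemma simple_span (I : Submodule Rᵐᵒᵖ R) (e : R) (he : e ∉ I)
    (h : ∀ f : R, ∃ c : K, e * (f - algebraMap K R c) ∈ I) :
    IsSimpleModule Rᵐᵒᵖ ↥(Submodule.span Rᵐᵒᵖ {I.mkQ e}) := by
  have he' : I.mkQ e ≠ 0 := by
    intro h0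
    exact he ((Submodule.Quotient.mk_eq_zero I).1 h0)
  rw [isSimpleModule_iff_isAtom]
  refine ⟨?_, ?_⟩
  · rw [Ne, Submodule.span_singleton_eq_bot]
    exact he'
  · intro N hN
    rw [Submodule.eq_bot_iff]
    intro x hx
    by_contra hx0
    apply hN.not_ge
    rw [Submodule.span_singleton_le_iff_mem]
    obtain ⟨r, rfl⟩ := Submodule.mem_span_singleton.1 (hN.le hx)
    obtain ⟨c, hc⟩ := h r.unop
    have hr : r • I.mkQ e = I.mkQ (e * algebraMap K R c) := by
      rw [op_smul_mk, ← sub_eq_zero, ← map_sub, ← mul_sub]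
      exact (Submodule.Quotient.mk_eq_zero I).2 hc
    have hc0 : c ≠ 0 := by
      rintro rfl
      apply hx0
      rw [hr]; simp
    have : I.mkQ e = MulOpposite.op (algebraMap K R c⁻¹) • (r • I.mkQ e) := by
      rw [hr, op_smul_mk, MulOpposite.unop_op, mul_assoc, ← map_mul, mul_inv_cancel₀ hc0, map_one,
        mul_one]
    rw [this]
    exact N.smul_mem _ hx

lemma soc_ne_bot (I : Submodule Rᵐᵒᵖ R) (e : R) (he : e ∉ I)
    (h : ∀ f : R, ∃ c : K, e * (f - algebraMap K R c) ∈ I) :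
    moduleSocle Rᵐᵒᵖ (R ⧸ I) ≠ ⊥ := by
  intro h0
  have h1 : Submodule.span Rᵐᵒᵖ {I.mkQ e} ≤ moduleSocle Rᵐᵒᵖ (R ⧸ I) :=
    le_sSup (simple_span I e he h)
  rw [h0, le_bot_iff, Submodule.span_singleton_eq_bot] at h1
  exact he ((Submodule.Quotient.mk_eq_zero I).1 h1)

lemma comap_soc (I J : Submodule Rᵐᵒᵖ R) (hIJ : I ≤ J) (E : Set R)
    (hE : J ≤ I ⊔ Submodule.span Rᵐᵒᵖ E)
    (h : ∀ e ∈ E, ∀ f : R, ∃ c : K, e * (f - algebraMap K R c) ∈ I)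
    (hw : ∀ w : R, w ∉ I → ∃ e ∈ J, e * w ∉ I) :
    Submodule.comap I.mkQ (moduleSocle Rᵐᵒᵖ (R ⧸ I)) = J := by
  apply le_antisymm
  · have : moduleSocle Rᵐᵒᵖ (R ⧸ I) ≤ J.map I.mkQ := by
      apply sSup_le
      intro W hW
      have hW' : IsAtom W := isSimpleModule_iff_isAtom.1 hW
      obtain ⟨x, hxW, hx0⟩ := W.ne_bot_iff.1 hW'.1
      obtain ⟨w, rfl⟩ := I.mkQ_surjective x
      have hwI : w ∉ I := fun h0 => hx0 ((Submodule.Quotient.mk_eq_zero I).2 h0)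
      obtain ⟨e, heJ, hew⟩ := hw w hwI
      have h1 : I.mkQ (e * w) ∈ W := by
        have := W.smul_mem (MulOpposite.op e) hxW
        rw [op_smul_mk, MulOpposite.unop_op, mul_comm] at this
        exact this
      have h2 : I.mkQ (e * w) ∈ J.map I.mkQ :=
        Submodule.mem_map_of_mem (mul_mem_right' J w heJ)
      rcases hW'.le_iff.1 (inf_le_left : W ⊓ J.map I.mkQ ≤ W) with h3 | h3
      · exfalso
        have : I.mkQ (e * w) ∈ W ⊓ J.map I.mkQ := ⟨h1, h2⟩
        rw [h3] at this
        exact hew ((Submodule.Quotient.mk_eq_zero I).1 this)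
      · exact inf_eq_left.1 h3
    refine (Submodule.comap_mono this).trans ?_
    rw [Submodule.comap_map_mkQ]
    exact sup_le hIJ le_rfl
  · refine hE.trans (sup_le ?_ ?_)
    · intro x hx
      have h0 : I.mkQ x = 0 := (Submodule.Quotient.mk_eq_zero I).2 hx
      rw [Submodule.mem_comap, h0]
      exact zero_mem _
    · rw [Submodule.span_le]
      intro e he
      by_cases heI : e ∈ I
      · have h0 : I.mkQ e = 0 := (Submodule.Quotient.mk_eq_zero I).2 heI
        rw [SetLike.mem_coe, Submodule.mem_comap, h0]
        exact zero_mem _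
      · have h1 : Submodule.span Rᵐᵒᵖ {I.mkQ e} ≤ moduleSocle Rᵐᵒᵖ (R ⧸ I) :=
          le_sSup (simple_span I e heI (h e he))
        exact h1 (Submodule.mem_span_singleton_self _)

lemma pfa_of_comm (R : Type u) [CommRing R] : HasPFA R := by
  intro M _ _ hM
  have : Nontrivial M := IsSimpleModule.nontrivial Rᵐᵒᵖ M
  obtain ⟨m, hm⟩ := exists_ne (0 : M)
  have key : ∀ r : R, r ∈ rightAnnihilator R M ↔ MulOpposite.op r • m = 0 := by
    intro r
    refine ⟨fun h => h m, fun h m' => ?_⟩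
    obtain ⟨t, rfl⟩ := IsSimpleModule.toSpanSingleton_surjective Rᵐᵒᵖ hm m'
    rw [LinearMap.toSpanSingleton_apply, ← mul_smul, mul_comm, mul_smul, h, smul_zero]
  let φ : R →ₗ[Rᵐᵒᵖ] M :=
    { toFun := fun r => MulOpposite.op r • m
      map_add' := by intro a b; simp [add_smul]
      map_smul' := by
        intro c r
        have h : MulOpposite.op (c • r) = c * MulOpposite.op r := by
          rw [MulOpposite.smul_eq_mul_unop, MulOpposite.op_mul, MulOpposite.op_unop]
        simp only [RingHom.id_apply]
        rw [h, mul_smul] }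
  have hk : LinearMap.ker φ = rightAnnihilator R M := by
    ext r; rw [key]; rfl
  have hs : Function.Surjective φ := by
    intro y
    obtain ⟨t, rfl⟩ := IsSimpleModule.toSpanSingleton_surjective Rᵐᵒᵖ hm y
    exact ⟨t.unop, rfl⟩
  rw [← hk]
  have e := φ.quotKerEquivOfSurjective hs
  have : IsArtinian Rᵐᵒᵖ M := inferInstance
  exact isArtinian_of_linearEquiv e.symm

lemma layer_equiv {α : Ordinal.{u}} {A : Type u} [NonUnitalNonAssocRing A]
    (ψ : ↥(socleSeq R (α + 1)) →+ A) (hs : Function.Surjective ψ)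
    (hk : ∀ x, ψ x = 0 ↔ (x : R) ∈ socleSeq R α)
    (hm : ∀ x y : ↥(socleSeq R (α + 1)), ψ (MulOpposite.op (y : R) • x) = ψ x * ψ y) :
    ∃ φ : Layer R α ≃+ A, RespectsLayerMul R α φ := by
  let g : Layer R α →+ A := QuotientAddGroup.lift (layerKer R α).toAddSubgroup ψ
    (fun x hx => (hk x).2 hx)
  have hg : ∀ x, g (Submodule.Quotient.mk x) = ψ x := fun x => rfl
  have hb : Function.Bijective g := by
    constructor
    · rw [injective_iff_map_eq_zero]
      intro a ha
      obtain ⟨x, rfl⟩ := Submodule.Quotient.mk_surjective _ a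
      rw [hg, hk] at ha
      exact (Submodule.Quotient.mk_eq_zero _).2 ha
    · intro a
      obtain ⟨x, rfl⟩ := hs a
      exact ⟨Submodule.Quotient.mk x, hg x⟩
  refine ⟨AddEquiv.ofBijective g hb, ?_⟩
  intro x y
  exact hm x y

lemma socleSeq_zero : socleSeq R 0 = ⊥ := by
  simp only [socleSeq]
  exact Ordinal.limitRecOn_zero ..

lemma socleSeq_succ (α : Ordinal.{u}) : socleSeq R (α + 1) =
    Submodule.comap (socleSeq R α).mkQ (moduleSocle Rᵐᵒᵖ (R ⧸ socleSeq R α)) := by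
  conv_lhs => simp only [socleSeq]
  exact Ordinal.limitRecOn_add_one ..

end comm


/-- The right ideal which is the kernel of a family of characters. -/
def kerFam {K R : Type u} [Field K] [CommRing R] [Algebra K R] {ι : Type u}
    (l : ι → R →ₐ[K] K) : Submodule Rᵐᵒᵖ R where
  carrier := {f | ∀ i, l i f = 0}
  add_mem' := by intro a b ha hb i; rw [map_add, ha i, hb i, add_zero]
  zero_mem' := by intro i; exact map_zero _
  smul_mem' := by
    intro c r hr i
    rw [MulOpposite.smul_eq_mul_unop, map_mul, hr i, zero_mul]

lemma mem_kerFam {K R : Type u} [Field K] [CommRing R] [Algebra K R] {ι : Type u}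
    (l : ι → R →ₐ[K] K) (f : R) : f ∈ kerFam l ↔ ∀ i, l i f = 0 := Iff.rfl

open Classical in
theorem main_abstract {K R ι : Type u} [Field K] [CommRing R] [Algebra K R]
    (ev : ℕ → R →ₐ[K] K) (l : ι → R →ₐ[K] K) (inf : R →ₐ[K] K) (b : ℕ → R) (χ : ι → R)
    (hcard : Cardinal.mk ι = Cardinal.aleph 1)
    (hinj : ∀ f, (∀ n, ev n f = 0) → f = 0)
    (hb : ∀ m n, ev m (b n) = if m = n then 1 else 0)
    (hlb : ∀ i n, l i (b n) = 0)
    (hlχ : ∀ i j, l i (χ j) = if i = j then 1 else 0)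
    (hl : ∀ f, {i | l i f ≠ inf f}.Finite)
    (hfin : ∀ f, (∀ i, l i f = 0) → {n | ev n f ≠ 0}.Finite)
    (hrange : ∀ f, (Set.range fun n => ev n f).Finite) :
    IsVNRegular R ∧
    IsRightSemiartinian R ∧
    HasPFA R ∧
    IsLeast {o : Ordinal.{u} | socleSeq R o = ⊤} 3 ∧
    (∃ φ : Layer R 0 ≃+ (ℕ →₀ K), RespectsLayerMul R 0 φ) ∧
    (∃ (ι : Type u) (_ : Cardinal.mk ι = Cardinal.aleph 1)
      (φ : Layer R 1 ≃+ (ι →₀ K)), RespectsLayerMul R 1 φ) ∧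
    (∃ φ : Layer R 2 ≃+ K, RespectsLayerMul R 2 φ) ∧
    ¬(∀ I : Submodule Rᵐᵒᵖ R, Module.Projective Rᵐᵒᵖ ↥I) := by
  have hunc : Uncountable ι := by
    rw [← Cardinal.aleph0_lt_mk_iff, hcard]
    simp
  have hιinf : Infinite ι := inferInstance
  -- equality test
  have hext : ∀ f g : R, (∀ n, ev n f = ev n g) → f = g := by
    intro f g h
    rw [← sub_eq_zero]
    apply hinj
    intro n
    rw [map_sub, h n, sub_self]
  have hinf0 : ∀ f, {i | l i f ≠ 0}.Finite → inf f = 0 := by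
    intro f hf
    by_contra h0
    obtain ⟨i, hi⟩ := ((hf.union (hl f)).infinite_compl).nonempty
    simp only [Set.mem_compl_iff, Set.mem_union, Set.mem_ofPred_eq, not_or, not_not] at hi
    exact h0 (hi.2 ▸ hi.1)
  have hinfχ : ∀ i, inf (χ i) = 0 := by
    intro i
    apply hinf0
    apply (Set.finite_singleton i).subset
    intro j hj
    simp only [Set.mem_ofPred_eq, hlχ] at hj
    simpa using hj
  let J1 : Submodule Rᵐᵒᵖ R := kerFam l
  let J2 : Submodule Rᵐᵒᵖ R := kerFam (fun _ : PUnit.{u+1} => inf)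
  have mem1 : ∀ f, f ∈ J1 ↔ ∀ i, l i f = 0 := fun f => Iff.rfl
  have mem2 : ∀ f, f ∈ J2 ↔ inf f = 0 := fun f => ⟨fun h => h PUnit.unit, fun h _ => h⟩
  have h12 : J1 ≤ J2 := by
    intro f hf
    rw [mem2]
    apply hinf0
    convert Set.finite_empty (α := ι)
    ext i
    simp [(mem1 f).1 hf i]
  -- stability
  have st0 : ∀ n f, b n * (f - algebraMap K R (ev n f)) = 0 := by
    intro n f
    apply hinj
    intro m
    rw [map_mul, hb, map_sub, AlgHom.commutes]
    by_cases h : m = n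
    · subst h; simp
    · simp [h]
  have st1 : ∀ i f, χ i * (f - algebraMap K R (l i f)) ∈ J1 := by
    intro i f
    rw [mem1]
    intro m
    rw [map_mul, hlχ, map_sub, AlgHom.commutes]
    by_cases h : m = i
    · subst h; simp
    · simp [h]
  have st2 : ∀ f, 1 * (f - algebraMap K R (inf f)) ∈ J2 := by
    intro f
    rw [mem2, one_mul, map_sub, AlgHom.commutes]
    simp
  -- generation
  have gen1 : J1 ≤ Submodule.span Rᵐᵒᵖ (Set.range b) := by
    intro f hf
    have hF := hfin f hf
    have : f = ∑ n ∈ hF.toFinset, b n * algebraMap K R (ev n f) := by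
      apply hext
      intro m
      rw [map_sum]
      simp only [map_mul, hb, AlgHom.commutes]
      simp
    rw [this]
    refine Submodule.sum_mem _ fun n _ => ?_
    exact mul_mem_right' _ _ (Submodule.subset_span ⟨n, rfl⟩)
  have gen2 : J2 ≤ J1 ⊔ Submodule.span Rᵐᵒᵖ (Set.range χ) := by
    intro f hf
    have hF := hl f
    rw [(mem2 f).1 hf] at hF
    rw [← sub_add_cancel f (∑ i ∈ hF.toFinset, χ i * algebraMap K R (l i f))]
    refine Submodule.add_mem_sup ?_ ?_
    · rw [mem1]
      intro j
      rw [map_sub, map_sum]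
      simp only [map_mul, hlχ, AlgHom.commutes]
      simp only [ite_mul, one_mul, zero_mul, Finset.sum_ite_eq, Set.Finite.mem_toFinset,
        Set.mem_ofPred_eq]
      by_cases hj : l j f = 0
      · simp [hj]
      · simp [hj]
    · refine Submodule.sum_mem _ fun n _ => ?_
      exact mul_mem_right' _ _ (Submodule.subset_span ⟨n, rfl⟩)
  have bJ1 : ∀ n, b n ∈ J1 := fun n i => hlb i n
  have χJ2 : ∀ i, χ i ∈ J2 := fun i => (mem2 _).2 (hinfχ i)
  -- socle sequence
  have s0 : socleSeq R 0 = ⊥ := socleSeq_zero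
  have s1 : socleSeq R (0 + 1) = J1 := by
    rw [socleSeq_succ, s0]
    refine comap_soc (K := K) ⊥ J1 bot_le (Set.range b) (by rw [bot_sup_eq]; exact gen1) ?_ ?_
    · rintro _ ⟨n, rfl⟩ f
      exact ⟨ev n f, by rw [st0]; exact zero_mem _⟩
    · intro w hw
      by_contra! h
      apply hw
      rw [Submodule.mem_bot]
      apply hinj
      intro n
      have := h (b n) (bJ1 n)
      rw [Submodule.mem_bot] at this
      have h2 := congrArg (ev n) this
      simpa [hb] using h2
  have s1' : socleSeq R 1 = J1 := by rw [← s1, zero_add]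
  have s2 : socleSeq R (1 + 1) = J2 := by
    rw [socleSeq_succ, s1']
    refine comap_soc (K := K) J1 J2 h12 (Set.range χ) gen2 ?_ ?_
    · rintro _ ⟨n, rfl⟩ f
      exact ⟨l n f, st1 n f⟩
    · intro w hw
      by_contra! h
      apply hw
      rw [mem1]
      intro i
      have h2 := (mem1 _).1 (h (χ i) (χJ2 i)) i
      simpa [hlχ] using h2
  have s2' : socleSeq R 2 = J2 := by rw [← s2, one_add_one_eq_two]
  have s3 : socleSeq R (2 + 1) = ⊤ := by
    rw [socleSeq_succ, s2']
    refine comap_soc (K := K) J2 ⊤ le_top {1} ?_ ?_ ?_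
    · intro f _
      apply Submodule.mem_sup_right
      have := mul_mem_right' (Submodule.span Rᵐᵒᵖ ({1} : Set R)) f (Submodule.subset_span rfl)
      rwa [one_mul] at this
    · rintro _ rfl f
      exact ⟨inf f, st2 f⟩
    · intro w hw
      exact ⟨1, trivial, by rwa [one_mul]⟩
  have s3' : socleSeq R 3 = ⊤ := by rw [← s3, two_add_one_eq_three]
  have one2 : (1 : R) ∉ J2 := by
    rw [mem2, map_one]; exact one_ne_zero
  refine ⟨?_, ?_, pfa_of_comm R, ⟨s3', ?_⟩, ?_, ?_, ?_, ?_⟩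
  · intro r
    let q : Polynomial K := Lagrange.interpolate (hrange r).toFinset id (fun v => v⁻¹)
    refine ⟨Polynomial.aeval r q, ?_⟩
    apply hext
    intro n
    rw [map_mul, map_mul, ← Polynomial.aeval_algHom_apply, Polynomial.aeval_def,
      Algebra.algebraMap_self, Polynomial.eval₂_id]
    have hq : q.eval (ev n r) = (ev n r)⁻¹ :=
      Lagrange.eval_interpolate_at_node (s := (hrange r).toFinset) (v := id)
        (fun v => v⁻¹) (Set.injOn_id _) (by simp)
    rw [hq]
    by_cases h0 : ev n r = 0
    · simp [h0]
    · field_simp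
  · intro I hI
    by_cases hb1 : ∃ n, b n ∉ I
    · obtain ⟨n, hn⟩ := hb1
      exact soc_ne_bot (K := K) I (b n) hn fun f => ⟨ev n f, by rw [st0]; exact zero_mem _⟩
    · push Not at hb1
      have hJ1 : J1 ≤ I := gen1.trans (Submodule.span_le.2 (by rintro _ ⟨n, rfl⟩; exact hb1 n))
      by_cases hχ1 : ∃ n, χ n ∉ I
      · obtain ⟨n, hn⟩ := hχ1
        exact soc_ne_bot (K := K) I (χ n) hn fun f => ⟨l n f, hJ1 (st1 n f)⟩
      · push Not at hχ1
        have hJ2 : J2 ≤ I := gen2.trans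
          (sup_le hJ1 (Submodule.span_le.2 (by rintro _ ⟨n, rfl⟩; exact hχ1 n)))
        refine soc_ne_bot (K := K) I 1 ?_ fun f => ⟨inf f, hJ2 (st2 f)⟩
        intro h1
        apply hI
        rw [eq_top_iff]
        intro f _
        have := mul_mem_right' I f h1
        rwa [one_mul] at this
  · intro o ho
    by_contra hlt
    rw [not_le] at hlt
    have h2 : J2 ≠ ⊤ := fun h => one2 (h ▸ trivial)
    have ho' : socleSeq R o = ⊤ := ho
    obtain ⟨n, rfl⟩ := Ordinal.lt_omega0.1 (hlt.trans (Ordinal.natCast_lt_omega0 3))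
    have hn : n < 3 := by exact_mod_cast hlt
    interval_cases n
    · rw [Nat.cast_zero, s0] at ho'
      exact h2 (top_le_iff.1 (ho' ▸ bot_le))
    · rw [Nat.cast_one, s1'] at ho'
      exact h2 (top_le_iff.1 (ho' ▸ h12))
    · rw [Nat.cast_ofNat, s2'] at ho'
      exact h2 ho'
  · -- layer 0
    have hm : ∀ x : ↥(socleSeq R (0 + 1)), {n | ev n (x : R) ≠ 0}.Finite := fun x =>
      hfin x ((mem1 _).1 (by rw [← s1]; exact x.2))
    let ψ : ↥(socleSeq R (0 + 1)) →+ (ℕ →₀ K) :=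
      { toFun := fun x => Finsupp.ofSupportFinite (fun n => ev n (x : R)) (hm x)
        map_zero' := by ext n; simp [Finsupp.ofSupportFinite]
        map_add' := by
          intro x y; ext n; rw [Finsupp.add_apply]; exact map_add (ev n) (x : R) (y : R) }
    have hψ : ∀ x n, ψ x n = ev n (x : R) := fun x n => rfl
    refine layer_equiv ψ ?_ ?_ ?_
    · intro h
      refine ⟨⟨∑ n ∈ h.support, b n * algebraMap K R (h n), ?_⟩, ?_⟩
      · rw [s1]
        exact Submodule.sum_mem _ fun n _ => mul_mem_right' _ _ (bJ1 n)
      · ext m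
        rw [hψ]
        simp only [map_sum, map_mul, hb, AlgHom.commutes]
        simp
        tauto
    · intro x
      rw [s0, Submodule.mem_bot]
      constructor
      · intro h
        apply hinj
        intro n
        rw [← hψ, h]; rfl
      · intro h
        ext n
        rw [hψ, h, map_zero]; rfl
    · intro x y
      ext n
      rw [Finsupp.mul_apply, hψ, hψ, hψ, ← map_mul]
      rfl
  · -- layer 1
    have hm : ∀ x : ↥(socleSeq R (1 + 1)), {i | l i (x : R) ≠ 0}.Finite := fun x => by
      have h := hl (x : R)
      rwa [(mem2 _).1 (by rw [← s2]; exact x.2)] at h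
    refine ⟨ι, hcard, ?_⟩
    let ψ : ↥(socleSeq R (1 + 1)) →+ (ι →₀ K) :=
      { toFun := fun x => Finsupp.ofSupportFinite (fun n => l n (x : R)) (hm x)
        map_zero' := by ext n; simp [Finsupp.ofSupportFinite]
        map_add' := by
          intro x y; ext n; rw [Finsupp.add_apply]; exact map_add (l n) (x : R) (y : R) }
    have hψ : ∀ x n, ψ x n = l n (x : R) := fun x n => rfl
    refine layer_equiv ψ ?_ ?_ ?_
    · intro h
      refine ⟨⟨∑ n ∈ h.support, χ n * algebraMap K R (h n), ?_⟩, ?_⟩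
      · rw [s2]
        exact Submodule.sum_mem _ fun n _ => mul_mem_right' _ _ (χJ2 n)
      · ext m
        rw [hψ]
        simp only [map_sum, map_mul, hlχ, AlgHom.commutes]
        simp
        tauto
    · intro x
      rw [s1', mem1]
      constructor
      · intro h n
        rw [← hψ, h]; rfl
      · intro h
        ext n
        rw [hψ, h]; rfl
    · intro x y
      ext n
      rw [Finsupp.mul_apply, hψ, hψ, hψ, ← map_mul]
      rfl
  · -- layer 2
    let ψ : ↥(socleSeq R (2 + 1)) →+ K :=
      { toFun := fun x => inf (x : R)
        map_zero' := by simp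
        map_add' := by intro x y; simp }
    have hψ : ∀ x, ψ x = inf (x : R) := fun x => rfl
    refine layer_equiv ψ ?_ ?_ ?_
    · intro c
      refine ⟨⟨algebraMap K R c, by rw [s3]; trivial⟩, ?_⟩
      rw [hψ, AlgHom.commutes]; rfl
    · intro x
      rw [s2', mem2, hψ]
    · intro x y
      rw [hψ, hψ, hψ, ← map_mul]
      rfl
  · intro hproj
    obtain ⟨s, hs⟩ := (Module.projective_def'.1 (hproj J2))
    let β : ℕ → J2 := fun n => ⟨b n, h12 (bJ1 n)⟩
    let T : Set J2 := ⋃ n, ((s (β n)).support : Set J2)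
    have hT : T.Countable := Set.countable_iUnion fun n => (Finset.finite_toSet _).countable
    have hsT : ∀ x : J2, ∀ i, i ∉ T → s x i = 0 := by
      intro x i hi
      have hz : (s x i).unop = 0 := by
        apply hinj
        intro n
        have hx : MulOpposite.op (b n) • x = MulOpposite.op (algebraMap K R (ev n x)) • β n := by
          apply Subtype.ext
          change (x : R) * b n = b n * algebraMap K R (ev n x)
          have := st0 n x
          rw [mul_sub, sub_eq_zero] at this
          rw [mul_comm, this]
        have h1 := congrArg (fun y => s y i) hx
        have h2 : s (β n) i = 0 := by
          by_contra h
          exact hi (Set.mem_iUnion.2 ⟨n, by simpa using h⟩)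
        simp only [map_smul, Finsupp.smul_apply, h2, smul_zero] at h1
        have h3 := congrArg (fun y => ev n (MulOpposite.unop y)) h1
        simpa [hb] using h3
      exact MulOpposite.unop_injective hz
    have hbad : (⋃ t ∈ T, {i | l i (t : R) ≠ 0}).Countable := by
      refine hT.biUnion fun t _ => ?_
      have h := hl (t : R)
      rw [(mem2 _).1 t.2] at h
      exact h.countable
    obtain ⟨i, hi⟩ : ∃ i, i ∉ (⋃ t ∈ T, {i | l i (t : R) ≠ 0}) := by
      by_contra! h
      exact Set.not_countable_univ (hbad.mono fun i _ => h i)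
    simp only [Set.mem_iUnion, Set.mem_ofPred_eq, not_exists, not_not] at hi
    let x : J2 := ⟨χ i, χJ2 i⟩
    have hx : (Finsupp.linearCombination Rᵐᵒᵖ id) (s x) = x := LinearMap.congr_fun hs x
    rw [Finsupp.linearCombination_apply, Finsupp.sum] at hx
    have hx' := congrArg (fun y : J2 => l i (y : R)) hx
    have h1 : l i (x : R) = 1 := by
      change l i (χ i) = 1
      rw [hlχ, if_pos rfl]
    simp only [h1] at hx'
    rw [Submodule.coe_sum, map_sum, Finset.sum_eq_zero] at hx'
    · exact zero_ne_one hx'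
    · intro t ht
      have htT : t ∈ T := by
        by_contra h
        exact (Finsupp.mem_support_iff.1 ht) (hsT x t h)
      have : ((s x t • id t : J2) : R) = (t : R) * (s x t).unop := rfl
      rw [this, map_mul, hi t htT, zero_mul]

lemma exists_lim {K : Type*} [Field K] {X : Type*} [Infinite X] {Q : Type*} [CommRing Q]
    [Algebra K Q] (ρ : X → Q →ₐ[K] K) (h : ∀ q, ∃ c, ∀ᶠ x in Filter.cofinite, ρ x q = c) :
    ∃ l : Q →ₐ[K] K, ∀ q, ∀ᶠ x in Filter.cofinite, ρ x q = l q := by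
  choose l hl using h
  have huniq : ∀ q c, (∀ᶠ x in Filter.cofinite, ρ x q = c) → l q = c := by
    intro q c hc
    obtain ⟨x, h1, h2⟩ := ((hl q).and hc).exists
    exact h1.symm.trans h2
  refine ⟨
    { toFun := l, map_one' := ?_, map_mul' := ?_, map_zero' := ?_, map_add' := ?_, commutes' := ?_ },
    hl⟩
  · exact huniq _ _ (Filter.Eventually.of_forall fun x => map_one _)
  · intro a b
    apply huniq
    filter_upwards [hl a, hl b] with x h1 h2
    rw [map_mul, h1, h2]
  · exact huniq _ _ (Filter.Eventually.of_forall fun x => map_zero _)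
  · intro a b
    apply huniq
    filter_upwards [hl a, hl b] with x h1 h2
    rw [map_add, h1, h2]
  · intro c
    exact huniq _ _ (Filter.Eventually.of_forall fun x => AlgHom.commutes _ _)

open Classical in
lemma decomp_exists {K : Type u} [Field K] {ι : Type u} (A : ι → Set ℕ)
    (had : ∀ i j, i ≠ j → (A i ∩ A j).Finite) (f : ℕ → K)
    (hf : f ∈ Submodule.span K ((Set.range fun n => Pi.single n (1 : K)) ∪
        (Set.range fun i => Set.indicator (A i) fun _ => (1 : K)) ∪ {1})) :
    ∃ (c : K) (g : ι →₀ K), (∀ i, ∀ᶠ n in Filter.cofinite, n ∈ A i → f n = c + g i) ∧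
      (∀ᶠ n in Filter.cofinite,
        f n = c + g.sum fun i a => a * Set.indicator (A i) (fun _ => (1 : K)) n) ∧
      (Set.range f).Finite := by
  induction hf using Submodule.span_induction with
  | mem x hx =>
    rcases hx with (⟨m, rfl⟩ | ⟨j, rfl⟩) | rfl
    · have hm : ∀ᶠ n in Filter.cofinite, (Pi.single m (1 : K) : ℕ → K) n = 0 := by
        rw [Filter.eventually_cofinite]
        apply (Set.finite_singleton m).subset
        intro n hn
        by_contra h
        exact hn (by simp [Pi.single_apply]; simpa using h)
      refine ⟨0, 0, fun i => ?_, ?_, ?_⟩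
      · filter_upwards [hm] with n hn _
        simpa using hn
      · filter_upwards [hm] with n hn
        simpa using hn
      · apply (Set.toFinite {(0 : K), 1}).subset
        rintro _ ⟨n, rfl⟩
        by_cases h : n = m <;> simp [h]
    · refine ⟨0, Finsupp.single j 1, fun i => ?_, ?_, ?_⟩
      · by_cases hij : i = j
        · subst hij
          refine Filter.Eventually.of_forall fun n hn => ?_
          simp [hn]
        · have h1 : ∀ᶠ n in Filter.cofinite, n ∉ A i ∩ A j := by
            rw [Filter.eventually_cofinite]
            simpa using had i j hij
          filter_upwards [h1] with n hn hni
          have : n ∉ A j := fun h => hn ⟨hni, h⟩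
          simp [this, Ne.symm hij]
      · refine Filter.Eventually.of_forall fun n => ?_
        rw [Finsupp.sum_single_index] <;> simp
      · apply (Set.toFinite {(0 : K), 1}).subset
        rintro _ ⟨n, rfl⟩
        by_cases h : n ∈ A j <;> simp [h]
    · refine ⟨1, 0, fun i => ?_, ?_, ?_⟩
      · exact Filter.Eventually.of_forall fun n _ => by simp
      · exact Filter.Eventually.of_forall fun n => by simp
      · apply (Set.finite_singleton (1 : K)).subset
        rintro _ ⟨n, rfl⟩
        simp
  | zero =>
    refine ⟨0, 0, fun i => ?_, ?_, ?_⟩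
    · exact Filter.Eventually.of_forall fun n _ => by simp
    · exact Filter.Eventually.of_forall fun n => by simp
    · apply (Set.finite_singleton (0 : K)).subset
      rintro _ ⟨n, rfl⟩
      simp
  | add x y _ _ hx hy =>
    obtain ⟨c, g, h1, h2, h3⟩ := hx
    obtain ⟨c', g', h1', h2', h3'⟩ := hy
    refine ⟨c + c', g + g', fun i => ?_, ?_, ?_⟩
    · filter_upwards [h1 i, h1' i] with n hn hn' hA
      rw [Pi.add_apply, hn hA, hn' hA, Finsupp.add_apply]; ring
    · filter_upwards [h2, h2'] with n hn hn'
      rw [Pi.add_apply, hn, hn', Finsupp.sum_add_index']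
      · ring
      · intro i; rw [zero_mul]
      · intro i a a'; rw [add_mul]
    · apply (h3.image2 (· + ·) h3').subset
      rintro _ ⟨n, rfl⟩
      exact ⟨x n, ⟨n, rfl⟩, y n, ⟨n, rfl⟩, rfl⟩
  | smul a x _ hx =>
    obtain ⟨c, g, h1, h2, h3⟩ := hx
    refine ⟨a * c, a • g, fun i => ?_, ?_, ?_⟩
    · filter_upwards [h1 i] with n hn hA
      rw [Pi.smul_apply, hn hA, Finsupp.smul_apply, smul_eq_mul, smul_eq_mul]; ring
    · filter_upwards [h2] with n hn
      rw [Pi.smul_apply, hn, Finsupp.sum_smul_index', smul_eq_mul, mul_add, Finsupp.mul_sum]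
      · simp [mul_assoc]
      · intro i; rw [zero_mul]
    · apply (h3.image (a * ·)).subset
      rintro _ ⟨n, rfl⟩
      exact ⟨x n, ⟨n, rfl⟩, rfl⟩

end ADAux

/-- for an almost disjoint family `S` of cardinality `ℵ₁` of infinite
subsets of `ω`, the `K`-subalgebra `R'` of `K^ω` spanned, as a `K`-linear subspace, by
the canonical basis of `K^{(ω)}`, the characteristic functions of the members of `S`,
and the unit, is a semiartinian von Neumann regular ring with primitive factors
artinian of Loewy length `3`, with layers `L₀ ≅ K^{(ω)}`, `L₁ ≅ K^{(ω₁)}` and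
`L₂ ≅ K` (as rings without unit), and `R'` is not right hereditary. -/
theorem almostDisjoint_algebra_not_hereditary (K : Type u) [Field K]
    (S : Set (Set ℕ))
    (hcard : Cardinal.mk S = Cardinal.aleph 1)
    (hinf : ∀ A ∈ S, A.Infinite)
    (had : ∀ A ∈ S, ∀ B ∈ S, A ≠ B → (A ∩ B).Finite)
    (R' : Subalgebra K (ℕ → K))
    (hR' : (R' : Set (ℕ → K)) =
      ↑(Submodule.span K ((Set.range fun n => Pi.single n (1 : K)) ∪
        ((fun A => Set.indicator A fun _ => (1 : K)) '' S) ∪ {1}))) :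
    IsVNRegular ↥R' ∧
    IsRightSemiartinian ↥R' ∧
    HasPFA ↥R' ∧
    IsLeast {o : Ordinal.{u} | socleSeq ↥R' o = ⊤} 3 ∧
    (∃ φ : Layer ↥R' 0 ≃+ (ℕ →₀ K), RespectsLayerMul ↥R' 0 φ) ∧
    (∃ (ι : Type u) (_ : Cardinal.mk ι = Cardinal.aleph 1)
      (φ : Layer ↥R' 1 ≃+ (ι →₀ K)), RespectsLayerMul ↥R' 1 φ) ∧
    (∃ φ : Layer ↥R' 2 ≃+ K, RespectsLayerMul ↥R' 2 φ) ∧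
    ¬(∀ I : Submodule (↥R')ᵐᵒᵖ ↥R', Module.Projective (↥R')ᵐᵒᵖ ↥I) := by
  classical
  let ι : Type u := ULift.{u} S
  let A : ι → Set ℕ := fun i => i.down.1
  have hAinj : ∀ i j : ι, i ≠ j → A i ≠ A j := by
    intro i j hij h
    exact hij (ULift.down_injective (Subtype.ext h))
  have hAinf : ∀ i, (A i).Infinite := fun i => hinf _ i.down.2
  have hAad : ∀ i j, i ≠ j → (A i ∩ A j).Finite := fun i j hij =>
    had _ i.down.2 _ j.down.2 (hAinj i j hij)
  have hrg : ((fun A => Set.indicator A fun _ => (1 : K)) '' S) =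
      (Set.range fun i => Set.indicator (A i) fun _ => (1 : K)) := by
    ext x
    constructor
    · rintro ⟨B, hB, rfl⟩
      exact ⟨⟨⟨B, hB⟩⟩, rfl⟩
    · rintro ⟨i, rfl⟩
      exact ⟨_, i.down.2, rfl⟩
  rw [hrg] at hR'
  have hmem : ∀ f : ℕ → K, f ∈ R' ↔ f ∈ Submodule.span K
      ((Set.range fun n => Pi.single n (1 : K)) ∪
        (Set.range fun i => Set.indicator (A i) fun _ => (1 : K)) ∪ {1}) := by
    intro f
    rw [← SetLike.mem_coe, hR', SetLike.mem_coe]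
  have hst := fun f : R' => ADAux.decomp_exists A hAad (f : ℕ → K) ((hmem _).1 f.2)
  have hcardι : Cardinal.mk ι = Cardinal.aleph 1 := by
    rw [Cardinal.mk_uLift, hcard, Cardinal.lift_aleph, Ordinal.lift_one]
  have hunc : Uncountable ι := by
    rw [← Cardinal.aleph0_lt_mk_iff, hcardι]
    simp
  have hιinf : Infinite ι := inferInstance
  let ev : ℕ → R' →ₐ[K] K := fun n => (Pi.evalAlgHom K (fun _ : ℕ => K) n).comp R'.val
  have hev : ∀ n f, ev n f = (f : ℕ → K) n := fun n f => rfl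
  have hlex : ∀ i : ι, ∃ l : R' →ₐ[K] K,
      ∀ q, ∀ᶠ x : A i in Filter.cofinite, ev (x : ℕ) q = l q := by
    intro i
    have : Infinite (A i) := (hAinf i).to_subtype
    refine ADAux.exists_lim (fun x : A i => ev x) ?_
    intro q
    obtain ⟨c, g, h1, -, -⟩ := hst q
    refine ⟨c + g i, ?_⟩
    have := (Subtype.val_injective (p := fun n => n ∈ A i)).tendsto_cofinite.eventually (h1 i)
    filter_upwards [this] with x hx
    exact hx x.2
  choose l hl using hlex
  have huniq : ∀ (i : ι) (q : R') (c : K), (∀ᶠ n in Filter.cofinite, n ∈ A i → (q : ℕ → K) n = c) → l i q = c := by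
    intro i q c h
    have : Infinite (A i) := (hAinf i).to_subtype
    have h' := (Subtype.val_injective (p := fun n => n ∈ A i)).tendsto_cofinite.eventually h
    obtain ⟨x, h1, h2⟩ := (h'.and (hl i q)).exists
    exact h2.symm.trans (h1 x.2)
  have hgfin : ∀ (c : K) (g : ι →₀ K), ∀ᶠ i in Filter.cofinite, c + g i = c := by
    intro c g
    rw [Filter.eventually_cofinite]
    apply g.hasFiniteSupport.subset
    intro i hi h0
    exact hi (by rw [h0, add_zero])
  obtain ⟨inf, hinf'⟩ := ADAux.exists_lim l (by
    intro q
    obtain ⟨c, g, h1, -, -⟩ := hst q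
    refine ⟨c, ?_⟩
    filter_upwards [hgfin c g] with i hi
    rw [huniq i q _ (h1 i), hi])
  let b : ℕ → R' := fun n => ⟨Pi.single n (1 : K),
    (hmem _).2 (Submodule.subset_span (Or.inl (Or.inl ⟨n, rfl⟩)))⟩
  let χ : ι → R' := fun i => ⟨Set.indicator (A i) fun _ => (1 : K),
    (hmem _).2 (Submodule.subset_span (Or.inl (Or.inr ⟨i, rfl⟩)))⟩
  refine ADAux.main_abstract ev l inf b χ hcardι ?_ ?_ ?_ ?_ ?_ ?_ ?_
  · intro f h
    apply Subtype.ext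
    funext n
    exact h n
  · intro m n
    rw [hev]
    change (Pi.single n (1 : K) : ℕ → K) m = _
    rw [Pi.single_apply]
  · intro i n
    apply huniq
    rw [Filter.eventually_cofinite]
    apply (Set.finite_singleton n).subset
    intro m hm
    by_contra h
    apply hm
    intro _
    change (Pi.single n (1 : K) : ℕ → K) m = _
    rw [Pi.single_apply, if_neg (fun h2 : m = n => h h2)]
  · intro i j
    apply huniq
    by_cases hij : i = j
    · subst hij
      refine Filter.Eventually.of_forall fun n hn => ?_
      change Set.indicator (A i) (fun _ => (1 : K)) n = _
      simp [hn]
    · have h1 : ∀ᶠ n in Filter.cofinite, n ∉ A i ∩ A j := by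
        rw [Filter.eventually_cofinite]
        simpa using hAad i j hij
      filter_upwards [h1] with n hn hni
      have : n ∉ A j := fun h => hn ⟨hni, h⟩
      change Set.indicator (A j) (fun _ => (1 : K)) n = _
      simp [this, hij]
  · intro f
    exact Filter.eventually_cofinite.1 (hinf' f)
  · intro f hf
    obtain ⟨c, g, h1, h2, -⟩ := hst f
    have hcg : ∀ i, c + g i = 0 := by
      intro i
      rw [← huniq i f _ (h1 i), hf i]
    have hc : c = 0 := by
      obtain ⟨i, hi⟩ := (hgfin c g).exists
      rw [← hi, hcg i]
    have hg : g = 0 := by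
      ext i
      simpa [hc] using hcg i
    subst hc hg
    simpa [Filter.eventually_cofinite, hev] using h2
  · intro f
    obtain ⟨c, g, -, -, h3⟩ := hst f
    exact h3
end

section
/- Let K be a field. For every countable ordinal α with 0 < α < ω_1 there exists a K-algebra R_α which is a semiartinian von Neumann regular ring with primitive factors artinian of Loewy length exactly α+1, all of whose layers L_β (β < α) are countably generated while the top layer L_α is isomorphic to K; in particular R_α is left and right hereditary, and R_α embeds as a K-subalgebra of K^ω. -/
set_option synthInstance.maxHeartbeats 1000000
set_option maxHeartbeats 2000000


universe u

open Submodule Function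

namespace LW

/-- Cantor–Bendixson rank of a nonzero ordinal. -/
noncomputable def rk (x : Ordinal.{u}) : Ordinal.{u} :=
  sInf {g | ∃ a < x, ∀ y, ∀ _ : a < y, ∀ _ : y < x, rk y < g}
termination_by x

theorem rk_nonempty (x : Ordinal.{u}) (hx : 0 < x) :
    {g | ∃ a < x, ∀ y, a < y → y < x → rk y < g}.Nonempty := by
  have : BddAbove (Set.image rk (Set.Iio x)) := Ordinal.bddAbove_of_small
  obtain ⟨b, hb⟩ := this
  exact ⟨b + 1, 0, hx, fun y _ h => Order.lt_add_one_iff.2 (hb ⟨y, h, rfl⟩)⟩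

theorem rk_A (x : Ordinal.{u}) (hx : 0 < x) : ∃ a < x, ∀ y, a < y → y < x → rk y < rk x := by
  conv => enter [1, a, 2, y, h1, h2]; rw [rk.eq_1 x]
  exact csInf_mem (rk_nonempty x hx)

theorem rk_le {x g a : Ordinal.{u}} (ha : a < x) (h : ∀ y, a < y → y < x → rk y < g) :
    rk x ≤ g := by
  rw [rk.eq_1 x]
  exact csInf_le' ⟨a, ha, h⟩

theorem rk_B {x b a : Ordinal.{u}} (ha : a < x) (hb : b < rk x) :
    ∃ y, a < y ∧ y < x ∧ b ≤ rk y := by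
  by_contra! h
  exact absurd (rk_le ha h) (not_le.2 hb)

theorem rk_add (a x : Ordinal.{u}) (hx : 0 < x) : rk (a + x) = rk x := by
  induction x using WellFoundedLT.induction with
  | ind x ih =>
  apply le_antisymm
  · obtain ⟨b, hb, h⟩ := rk_A x hx
    apply rk_le (a := a + b) (by simpa using hb)
    intro y h1 h2
    obtain ⟨z, rfl⟩ : ∃ z, y = a + z := ⟨y - a, by
      rw [Ordinal.add_sub_cancel_of_le (le_trans (by simp) h1.le)]⟩
    simp only [add_lt_add_iff_left] at h1 h2
    rw [ih z h2 (lt_of_le_of_lt (by simp) h1)]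
    exact h z h1 h2
  · obtain ⟨b, hb, h⟩ := rk_A (a + x) (lt_of_lt_of_le hx (by simp))
    have hb' : b - a < x := by
      by_cases hab : a ≤ b
      · rw [← Ordinal.add_sub_cancel_of_le hab] at hb
        simpa using hb
      · rw [Ordinal.sub_eq_zero_iff_le.2 (not_le.1 hab).le]; exact hx
    apply rk_le hb'
    intro y h1 h2
    rw [← ih y h2 (lt_of_le_of_lt (by simp) h1)]
    exact h _ (lt_of_le_of_lt (Ordinal.le_add_sub b a) (by simpa using h1)) (by simpa using h2)

theorem rk_lt_of (α : Ordinal.{u}) (ih : ∀ c < α, rk (Ordinal.omega0 ^ c) = c)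
    (y : Ordinal.{u}) (hy : 0 < y) (h : y < Ordinal.omega0 ^ α) : rk y < α := by
  induction y using WellFoundedLT.induction with
  | ind y ihy =>
  have h1 : Ordinal.omega0 ^ (Ordinal.log Ordinal.omega0 y) ≤ y :=
    Ordinal.opow_log_le_self _ hy.ne'
  have hc : Ordinal.log Ordinal.omega0 y < α := by
    have := lt_of_le_of_lt h1 h
    exact (Ordinal.opow_lt_opow_iff_right Ordinal.one_lt_omega0).1 this
  have h2 : y < Ordinal.omega0 ^ (Order.succ (Ordinal.log Ordinal.omega0 y)) :=
    Ordinal.lt_opow_succ_log_self Ordinal.one_lt_omega0 y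
  set c := Ordinal.log Ordinal.omega0 y
  have e := Ordinal.add_sub_cancel_of_le h1
  rcases eq_or_ne (y - Ordinal.omega0 ^ c) 0 with h0 | h0
  · rw [h0, add_zero] at e
    rw [← e, ih c hc]; exact hc
  · have hp : 0 < y - Ordinal.omega0 ^ c := pos_iff_ne_zero.2 h0
    have hlt : y - Ordinal.omega0 ^ c < y := by
      refine lt_of_le_of_ne (Ordinal.sub_le_self _ _) fun he => ?_
      rw [he, Ordinal.add_eq_right_iff_mul_omega0_le, ← Ordinal.opow_succ] at e
      exact absurd h2 (not_lt.2 e)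
    have := ihy _ hlt hp (hlt.trans h)
    rw [← e, rk_add _ _ hp]; exact this

theorem rk_opow (α : Ordinal.{u}) : rk (Ordinal.omega0 ^ α) = α := by
  induction α using WellFoundedLT.induction with
  | ind α ih =>
  have hpos : ∀ c : Ordinal.{u}, 0 < Ordinal.omega0 ^ c :=
    fun c => Ordinal.opow_pos _ Ordinal.omega0_pos
  apply le_antisymm
  · exact rk_le (hpos α) fun y h1 h2 => rk_lt_of α ih y h1 h2
  · by_contra! hlt
    obtain ⟨a, ha, h⟩ := rk_A _ (hpos α)
    have h3 := ih _ hlt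
    have := h (a + Ordinal.omega0 ^ (rk (Ordinal.omega0 ^ α)))
      (by simpa using hpos _)
      (Ordinal.isPrincipal_add_omega0_opow α ha
        ((Ordinal.opow_lt_opow_iff_right Ordinal.one_lt_omega0).2 hlt))
    rw [rk_add _ _ (hpos _), h3] at this
    exact lt_irrefl _ this

theorem rk_lt (α : Ordinal.{u}) (y : Ordinal.{u}) (hy : 0 < y) (h : y < Ordinal.omega0 ^ α) :
    rk y < α := rk_lt_of α (fun c _ => rk_opow c) y hy h

theorem exists_enum (α : Ordinal.{u}) (hα : α < (Cardinal.aleph 1).ord) :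
    ∃ p : ℕ → Ordinal.{u}, Set.range p = Set.Ioc 0 (Ordinal.omega0 ^ α) := by
  have hc : (Set.Ioc 0 (Ordinal.omega0.{u} ^ α)).Countable := by
    have h : Ordinal.omega0.{u} ^ α < (Cardinal.aleph 1).ord := by
      have h1 : Ordinal.omega0 < (Cardinal.aleph.{u} 1).ord := by
        rw [Cardinal.lt_ord, Ordinal.card_omega0]
        exact Cardinal.aleph0_lt_aleph_one
      exact Ordinal.isPrincipal_opow_ord (Cardinal.aleph0_le_aleph 1) h1 hα
    refine Set.Countable.mono (s₂ := Set.Iio (Order.succ (Ordinal.omega0.{u} ^ α)))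
      (fun x hx => Order.lt_succ_of_le hx.2) ?_
    have h2 : Order.succ (Ordinal.omega0.{u} ^ α) < (Cardinal.aleph 1).ord :=
      (Cardinal.isSuccLimit_ord (Cardinal.aleph0_le_aleph 1)).succ_lt h
    rw [Cardinal.lt_ord, Cardinal.lt_aleph_one_iff] at h2
    rw [← Cardinal.le_aleph0_iff_set_countable, Cardinal.mk_Iio_ordinal,
      Cardinal.lift_le_aleph0]
    exact h2
  obtain ⟨p, hp⟩ := hc.exists_eq_range ⟨_, Ordinal.opow_pos _ Ordinal.omega0_pos, le_rfl⟩
  exact ⟨p, hp.symm⟩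
end LW

namespace LW
section
variable {K : Type u} [Field K]

/-- Functions locally constant along `p`. -/
def LC (K : Type u) [Field K] (p : ℕ → Ordinal.{u}) (hp : ∀ n, 0 < p n) :
    Subalgebra K (ℕ → K) where
  carrier := {f | ∀ n, ∃ a < p n, ∀ m, a < p m → p m ≤ p n → f m = f n}
  mul_mem' := by
    intro f g hf hg n
    obtain ⟨a, ha, h⟩ := hf n
    obtain ⟨b, hb, h'⟩ := hg n
    refine ⟨max a b, max_lt ha hb, fun m h1 h2 => ?_⟩
    simp [h m ((le_max_left _ _).trans_lt h1) h2, h' m ((le_max_right _ _).trans_lt h1) h2]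
  add_mem' := by
    intro f g hf hg n
    obtain ⟨a, ha, h⟩ := hf n
    obtain ⟨b, hb, h'⟩ := hg n
    refine ⟨max a b, max_lt ha hb, fun m h1 h2 => ?_⟩
    simp [h m ((le_max_left _ _).trans_lt h1) h2, h' m ((le_max_right _ _).trans_lt h1) h2]
  algebraMap_mem' := fun c n => ⟨0, hp n, fun m _ _ => rfl⟩

variable {p : ℕ → Ordinal.{u}} {hp : ∀ n, 0 < p n}

theorem LC_loc (f : LC K p hp) (n : ℕ) :
    ∃ a < p n, ∀ m, a < p m → p m ≤ p n → f.1 m = f.1 n := f.2 n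

open Classical in
/-- indicator functions -/
noncomputable def E (K : Type u) [Field K] (p : ℕ → Ordinal.{u}) (hp : ∀ n, 0 < p n)
    (a b : Ordinal.{u}) : LC K p hp :=
  ⟨fun m => if a < p m ∧ p m ≤ b then 1 else 0, by
    intro n
    by_cases h1 : p n ≤ a
    · refine ⟨0, hp n, fun m _ h => ?_⟩
      dsimp only
      rw [if_neg (fun h' => absurd h'.1 (not_lt.2 (h.trans h1))),
        if_neg (fun h' => absurd h'.1 (not_lt.2 h1))]
    · by_cases h2 : p n ≤ b
      · refine ⟨a, not_le.1 h1, fun m h3 h4 => ?_⟩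
        dsimp only
        rw [if_pos ⟨h3, h4.trans h2⟩, if_pos ⟨not_le.1 h1, h2⟩]
      · refine ⟨b, not_le.1 h2, fun m h3 h4 => ?_⟩
        dsimp only
        rw [if_neg (fun h' => absurd h'.2 (not_le.2 h3)), if_neg (fun h' => absurd h'.2 h2)]⟩

theorem E_pos {a b : Ordinal.{u}} {m : ℕ} (h1 : a < p m) (h2 : p m ≤ b) :
    (E K p hp a b).1 m = 1 := if_pos ⟨h1, h2⟩

theorem E_neg1 {a b : Ordinal.{u}} {m : ℕ} (h : p m ≤ a) :
    (E K p hp a b).1 m = 0 := if_neg fun h' => absurd h'.1 (not_lt.2 h)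

theorem E_neg2 {a b : Ordinal.{u}} {m : ℕ} (h : b < p m) :
    (E K p hp a b).1 m = 0 := if_neg fun h' => absurd h'.2 (not_le.2 h)

theorem E_neg {a b : Ordinal.{u}} {m : ℕ} (h : ¬ (a < p m ∧ p m ≤ b)) :
    (E K p hp a b).1 m = 0 := if_neg h

theorem LC_ext {f g : LC K p hp} (h : ∀ m, f.1 m = g.1 m) : f = g := Subtype.ext (funext h)

theorem mul_val (f g : LC K p hp) (m : ℕ) : (f * g).1 m = f.1 m * g.1 m := rfl
theorem add_val (f g : LC K p hp) (m : ℕ) : (f + g).1 m = f.1 m + g.1 m := rfl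
theorem sub_val (f g : LC K p hp) (m : ℕ) : (f - g).1 m = f.1 m - g.1 m := rfl
theorem zero_val (m : ℕ) : (0 : LC K p hp).1 m = 0 := rfl
theorem one_val (m : ℕ) : (1 : LC K p hp).1 m = 1 := rfl
/-- constants -/
def C (K : Type u) [Field K] (p : ℕ → Ordinal.{u}) (hp : ∀ n, 0 < p n) (c : K) : LC K p hp :=
  algebraMap K (LC K p hp) c
theorem C_val (c : K) (m : ℕ) : (C K p hp c).1 m = c := rfl

theorem mem_mul {R : Type*} [CommRing R] (J : Submodule Rᵐᵒᵖ R) {g : R} (hg : g ∈ J) (c : R) :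
    g * c ∈ J := J.smul_mem (MulOpposite.op c) hg

theorem mem_mul' {R : Type*} [CommRing R] (J : Submodule Rᵐᵒᵖ R) {g : R} (hg : g ∈ J) (c : R) :
    c * g ∈ J := mul_comm g c ▸ mem_mul J hg c

theorem crit {T : Ordinal.{u}} (hT : Set.range p = Set.Ioc 0 T)
    (J : Submodule (LC K p hp)ᵐᵒᵖ (LC K p hp)) (f : LC K p hp)
    (h : ∀ n, f.1 n ≠ 0 → ∃ g ∈ J, g.1 n ≠ 0) : f ∈ J := by
  have key : ∀ x ≤ T, f * E K p hp 0 x ∈ J := by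
    intro x
    induction x using WellFoundedLT.induction with
    | ind x ih =>
    intro hx
    rcases eq_or_ne x 0 with rfl | h0
    · have : f * E K p hp 0 0 = 0 := LC_ext fun m => by
        rw [mul_val, E_neg2 (hp m), mul_zero, zero_val]
      rw [this]; exact J.zero_mem
    obtain ⟨n, rfl⟩ : x ∈ Set.range p := hT ▸ ⟨pos_iff_ne_zero.2 h0, hx⟩
    obtain ⟨a, ha, hfa⟩ := LC_loc f n
    by_cases hf : f.1 n = 0
    · have : f * E K p hp 0 (p n) = f * E K p hp 0 a := LC_ext fun m => by
        rw [mul_val, mul_val]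
        rcases le_or_gt (p m) a with h1 | h1
        · rw [E_pos (hp m) (h1.trans ha.le), E_pos (hp m) h1]
        · rw [E_neg2 h1]
          rcases le_or_gt (p m) (p n) with h2 | h2
          · rw [hfa m h1 h2, hf]; simp
          · rw [E_neg2 h2]
      rw [this]; exact ih a ha (ha.le.trans hx)
    · obtain ⟨g, hg, hgn⟩ := h n hf
      obtain ⟨b, hb, hgb⟩ := LC_loc g n
      have hab : max a b < p n := max_lt ha hb
      have : f * E K p hp 0 (p n) = f * E K p hp 0 (max a b) +
          g * (C K p hp (f.1 n / g.1 n) * E K p hp (max a b) (p n)) := LC_ext fun m => by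
        rw [add_val, mul_val, mul_val, mul_val, mul_val, C_val]
        rcases le_or_gt (p m) (max a b) with h1 | h1
        · rw [E_pos (hp m) (h1.trans hab.le), E_pos (hp m) h1, E_neg1 h1]; simp
        · rw [E_neg2 h1]
          rcases le_or_gt (p m) (p n) with h2 | h2
          · rw [hfa m ((le_max_left _ _).trans_lt h1) h2, hgb m ((le_max_right _ _).trans_lt h1) h2,
              E_pos (hp m) h2, E_pos h1 h2]
            field_simp
            simp
          · rw [E_neg2 h2, E_neg2 h2]; simp
      rw [this]
      exact J.add_mem (ih _ hab (hab.le.trans hx)) (mem_mul J hg _)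
  have : f * E K p hp 0 T = f := LC_ext fun m => by
    have : p m ∈ Set.Ioc 0 T := hT ▸ ⟨m, rfl⟩
    rw [mul_val, E_pos (hp m) this.2, mul_one]
  rw [← this]; exact key T le_rfl

/-- the ideal of functions with support in rank `< β` -/
def I (K : Type u) [Field K] (p : ℕ → Ordinal.{u}) (hp : ∀ n, 0 < p n)
    (v : Ordinal.{u} → Ordinal.{u}) (β : Ordinal.{u}) :
    Submodule (LC K p hp)ᵐᵒᵖ (LC K p hp) where
  carrier := {f | ∀ n, β ≤ v (p n) → f.1 n = 0}
  add_mem' := by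
    intro f g hf hg n h
    rw [add_val, hf n h, hg n h, add_zero]
  zero_mem' := fun n _ => rfl
  smul_mem' := by
    intro c f hf n h
    change (f * c.unop).1 n = 0
    rw [mul_val, hf n h, zero_mul]

theorem mem_I {v : Ordinal.{u} → Ordinal.{u}} {β : Ordinal.{u}} {f : LC K p hp} :
    f ∈ I K p hp v β ↔ ∀ n, β ≤ v (p n) → f.1 n = 0 := Iff.rfl

theorem mem_socle (J : Submodule (LC K p hp)ᵐᵒᵖ (LC K p hp)) (g : LC K p hp)
    (h : ∀ r, ∃ c : K, g * r - g * C K p hp c ∈ J) :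
    J.mkQ g ∈ moduleSocle (LC K p hp)ᵐᵒᵖ (LC K p hp ⧸ J) := by
  by_cases hg : J.mkQ g = 0
  · rw [hg]; exact zero_mem _
  have h' : ∀ y ∈ span (LC K p hp)ᵐᵒᵖ {J.mkQ g}, ∃ c : K, y = J.mkQ (g * C K p hp c) := by
    intro y hy
    obtain ⟨r, rfl⟩ := mem_span_singleton.1 hy
    obtain ⟨c, hc⟩ := h r.unop
    refine ⟨c, ?_⟩
    rw [← map_smul]
    exact (Submodule.Quotient.eq J).2 hc
  have hs : IsSimpleModule (LC K p hp)ᵐᵒᵖ (span (LC K p hp)ᵐᵒᵖ {J.mkQ g}) := by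
    rw [isSimpleModule_iff_isAtom]
    refine ⟨by simpa using hg, fun B hB => ?_⟩
    by_contra hne
    obtain ⟨b, hb, hb0⟩ := (Submodule.ne_bot_iff _).1 hne
    obtain ⟨c, rfl⟩ := h' b (hB.le hb)
    have hc : c ≠ 0 := by
      rintro rfl
      apply hb0
      have : g * C K p hp 0 = 0 := LC_ext fun m => by rw [mul_val, C_val, mul_zero, zero_val]
      rw [this, map_zero]
    apply hB.not_ge
    rw [span_singleton_le_iff_mem]
    have := B.smul_mem (MulOpposite.op (C K p hp c⁻¹)) hb
    rw [← map_smul] at this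
    convert this using 2
    change g = g * C K p hp c * C K p hp c⁻¹
    refine LC_ext fun m => ?_
    rw [mul_val, mul_val, C_val, C_val]; field_simp
  exact (le_sSup (a := span (LC K p hp)ᵐᵒᵖ {J.mkQ g}) hs) (mem_span_singleton_self _)

theorem socle_step {T : Ordinal.{u}} (hT : Set.range p = Set.Ioc 0 T)
    (v : Ordinal.{u} → Ordinal.{u})
    (hA : ∀ x, 0 < x → ∃ a < x, ∀ y, a < y → y < x → v y < v x)
    (hB : ∀ x b a : Ordinal.{u}, a < x → b < v x → ∃ y, a < y ∧ y < x ∧ b ≤ v y)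
    (β : Ordinal.{u}) :
    Submodule.comap (I K p hp v β : Submodule (LC K p hp)ᵐᵒᵖ (LC K p hp)).mkQ
      (moduleSocle (LC K p hp)ᵐᵒᵖ (LC K p hp ⧸ I K p hp v β)) = I K p hp v (β + 1) := by
  apply le_antisymm
  · have : moduleSocle (LC K p hp)ᵐᵒᵖ (LC K p hp ⧸ I K p hp v β) ≤
        (I K p hp v (β + 1)).map (I K p hp v β).mkQ := by
      apply sSup_le
      intro W hW b hb
      obtain ⟨h, rfl⟩ := (I K p hp v β).mkQ_surjective b
      refine ⟨h, fun n hn => ?_, rfl⟩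
      by_contra hne
      obtain ⟨a, ha, hha⟩ := LC_loc h n
      obtain ⟨y, hy1, hy2, hy3⟩ := hB (p n) β a ha (by simpa using hn)
      obtain ⟨k, rfl⟩ : y ∈ Set.range p := by
        have : p n ∈ Set.Ioc 0 T := hT ▸ ⟨n, rfl⟩
        rw [hT]
        exact ⟨pos_of_gt hy1, hy2.le.trans this.2⟩
      have hW' := isSimpleModule_iff_isAtom.1 hW
      have hm1 : (I K p hp v β).mkQ (h * E K p hp 0 (p k)) ∈ W := by
        exact W.smul_mem (MulOpposite.op (E K p hp 0 (p k))) hb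
      have hne1 : (I K p hp v β).mkQ (h * E K p hp 0 (p k)) ≠ 0 := by
        intro h0
        have := (Submodule.Quotient.mk_eq_zero _).1 h0 k hy3
        rw [mul_val, E_pos (hp k) le_rfl, mul_one, hha k hy1 hy2.le] at this
        exact hne this
      have hle : span (LC K p hp)ᵐᵒᵖ {(I K p hp v β).mkQ (h * E K p hp 0 (p k))} = W := by
        rcases hW'.le_iff.1 ((span_singleton_le_iff_mem _ _).2 hm1) with h0 | h0
        · exact absurd (span_singleton_eq_bot.1 h0) hne1
        · exact h0
      rw [← hle] at hb
      obtain ⟨r, hr⟩ := mem_span_singleton.1 hb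
      rw [← map_smul] at hr
      have h3 := (Submodule.Quotient.eq _).1 hr n ((le_add_of_nonneg_right (zero_le)).trans hn)
      change (h * E K p hp 0 (p k) * r.unop - h).1 n = 0 at h3
      rw [sub_val, mul_val, mul_val, E_neg2 hy2] at h3
      apply hne
      simpa using h3
    intro f hf
    obtain ⟨g, hg, hgf⟩ := this hf
    have h3 := (Submodule.Quotient.eq _).1 hgf
    intro n hn
    have h4 := h3 n ((le_add_of_nonneg_right (zero_le)).trans hn)
    rw [sub_val, hg n hn] at h4
    simpa using h4
  · intro f hf
    refine crit hT _ f fun n hn => ?_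
    have hv : v (p n) ≤ β := by
      by_contra! hlt
      exact hn (hf n (Order.add_one_le_of_lt hlt))
    obtain ⟨a, ha, h⟩ := hA (p n) (hp n)
    refine ⟨E K p hp a (p n), ?_, by rw [E_pos ha le_rfl]; exact one_ne_zero⟩
    refine mem_socle _ _ fun r => ⟨r.1 n, fun m hm => ?_⟩
    rw [sub_val, mul_val, mul_val, C_val]
    rcases le_or_gt (p m) a with h1 | h1
    · rw [E_neg1 h1]; simp
    rcases lt_trichotomy (p m) (p n) with h2 | h2 | h2
    · exact absurd (h _ h1 h2) (not_lt.2 (hv.trans hm))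
    · obtain ⟨b, hb, hr⟩ := LC_loc r n
      rw [hr m (h2 ▸ hb) h2.le, sub_self]
    · rw [E_neg2 h2]; simp

theorem I_limit {T : Ordinal.{u}} (hT : Set.range p = Set.Ioc 0 T)
    (v : Ordinal.{u} → Ordinal.{u})
    (hA : ∀ x, 0 < x → ∃ a < x, ∀ y, a < y → y < x → v y < v x)
    (o : Ordinal.{u}) (ho : Order.IsSuccLimit o) :
    (⨆ (β : Ordinal.{u}) (_ : β < o), I K p hp v β : Submodule (LC K p hp)ᵐᵒᵖ (LC K p hp)) = I K p hp v o := by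
  apply le_antisymm
  · refine iSup₂_le fun β hβ f hf n hn => hf n (hβ.le.trans hn)
  · intro f hf
    refine crit hT _ f fun n hn => ?_
    have hv : v (p n) < o := by
      by_contra! hlt
      exact hn (hf n hlt)
    obtain ⟨a, ha, h⟩ := hA (p n) (hp n)
    refine ⟨E K p hp a (p n), ?_, by rw [E_pos ha le_rfl]; exact one_ne_zero⟩
    refine (le_iSup₂_of_le (f := fun β (_ : β < o) => I K p hp v β) (v (p n) + 1)
      (ho.add_one_lt hv) le_rfl) fun m hm => ?_
    rcases le_or_gt (p m) a with h1 | h1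
    · rw [E_neg1 h1]
    rcases lt_trichotomy (p m) (p n) with h2 | h2 | h2
    · exact absurd (h _ h1 h2) (not_lt.2 ((le_add_of_nonneg_right (zero_le)).trans hm))
    · rw [h2] at hm
      exact absurd (Order.lt_add_one_iff.2 le_rfl) (not_lt.2 hm)
    · rw [E_neg2 h2]

theorem exists_gen {T : Ordinal.{u}} (hT : Set.range p = Set.Ioc 0 T)
    (J : Submodule (LC K p hp)ᵐᵒᵖ (LC K p hp)) :
    ∃ e : ℕ → LC K p hp, (∀ i, e i ∈ J) ∧ (∀ i, e i * e i = e i) ∧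
      ∀ J' : Submodule (LC K p hp)ᵐᵒᵖ (LC K p hp), (∀ i, e i ∈ J') → J ≤ J' := by
  classical
  let q : ℕ → Ordinal.{u} := fun k => Nat.casesOn k 0 p
  have hq : ∀ a ≤ T, ∃ k, q k = a := by
    intro a ha
    rcases eq_or_ne a 0 with rfl | h0
    · exact ⟨0, rfl⟩
    · obtain ⟨n, hn⟩ : a ∈ Set.range p := hT ▸ ⟨pos_iff_ne_zero.2 h0, ha⟩
      exact ⟨n + 1, hn⟩
  let e : ℕ → LC K p hp := fun i =>
    if E K p hp (q i.unpair.1) (p i.unpair.2) ∈ J then E K p hp (q i.unpair.1) (p i.unpair.2) else 0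
  refine ⟨e, fun i => ?_, fun i => ?_, fun J' hJ' r hr => ?_⟩
  · dsimp only [e]
    split_ifs with h
    · exact h
    · exact J.zero_mem
  · dsimp only [e]
    split_ifs with h
    · refine LC_ext fun m => ?_
      rw [mul_val]
      rcases Classical.em (q i.unpair.1 < p m ∧ p m ≤ p i.unpair.2) with h | h
      · rw [E_pos h.1 h.2, one_mul]
      · have : (E K p hp (q i.unpair.1) (p i.unpair.2)).1 m = 0 := E_neg h
        rw [this, zero_mul]
    · rw [zero_mul]
  · refine crit hT _ r fun n hn => ?_
    obtain ⟨a, ha, h⟩ := LC_loc r n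
    have hpn : p n ∈ Set.Ioc 0 T := hT ▸ ⟨n, rfl⟩
    obtain ⟨k, rfl⟩ := hq a (ha.le.trans hpn.2)
    have hE : E K p hp (q k) (p n) ∈ J := by
      have : E K p hp (q k) (p n) = r * (C K p hp (r.1 n)⁻¹ * E K p hp (q k) (p n)) :=
        LC_ext fun m => by
          rw [mul_val, mul_val, C_val]
          rcases le_or_gt (p m) (q k) with h1 | h1
          · rw [E_neg1 h1]; simp
          rcases le_or_gt (p m) (p n) with h2 | h2
          · rw [E_pos h1 h2, h m h1 h2]; field_simp
          · rw [E_neg2 h2]; simp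
      rw [this]; exact mem_mul J hr _
    refine ⟨_, hJ' (Nat.pair k n), ?_⟩
    have : e (Nat.pair k n) = E K p hp (q k) (p n) := by
      dsimp only [e]
      rw [Nat.unpair_pair]
      exact if_pos hE
    rw [this, E_pos ha le_rfl]
    exact one_ne_zero

theorem proj_of {S M : Type*} [Ring S] [AddCommGroup M] [Module S M]
    (φ : ℕ → M →ₗ[S] S) (m : ℕ → M)
    (h : ∀ x, ∃ N, (∀ n, N ≤ n → φ n x = 0) ∧ x = ∑ n ∈ Finset.range N, φ n x • m n) :
    Module.Projective S M := by
  have hfin : ∀ x, (Function.support fun n => φ n x).Finite := fun x => by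
    obtain ⟨N, hN, -⟩ := h x
    refine (Finset.range N).finite_toSet.subset fun n hn => ?_
    by_contra hh
    exact hn (hN n (by simpa using hh))
  let s : M →ₗ[S] (ℕ →₀ S) :=
    { toFun := fun x => Finsupp.ofSupportFinite (fun n => φ n x) (hfin x)
      map_add' := fun x y => by ext n; simp [Finsupp.ofSupportFinite_coe]
      map_smul' := fun c y => by ext n; simp [Finsupp.ofSupportFinite_coe] }
  refine Module.Projective.of_split s (Finsupp.linearCombination S m) ?_
  ext x
  obtain ⟨N, hN, hx⟩ := h x
  rw [LinearMap.comp_apply, Finsupp.linearCombination_apply,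
    Finsupp.sum_of_support_subset (s := Finset.range N)]
  · exact hx.symm
  · intro n hn
    rw [Finsupp.mem_support_iff] at hn
    by_contra hh
    exact hn (hN n (by simpa using hh))
  · intro i _; exact zero_smul _ _

theorem exists_orth {T : Ordinal.{u}} (hT : Set.range p = Set.Ioc 0 T)
    (J : Submodule (LC K p hp)ᵐᵒᵖ (LC K p hp)) :
    ∃ f : ℕ → LC K p hp, (∀ i, f i ∈ J) ∧ ∀ r ∈ J, ∃ N, (∀ n, N ≤ n → r * f n = 0) ∧
      r = ∑ n ∈ Finset.range N, r * f n * f n := by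
  obtain ⟨e, he, hid, hgen⟩ := exists_gen hT J
  let P : ℕ → LC K p hp := fun N => ∏ i ∈ Finset.range N, (1 - e i)
  have hPs : ∀ N, P (N + 1) = P N * (1 - e N) := fun N => Finset.prod_range_succ _ _
  have hP2 : ∀ N, P N * P N = P N := fun N => by
    rw [← Finset.prod_mul_distrib]
    refine Finset.prod_congr rfl fun i _ => ?_
    have := hid i
    linear_combination this
  have hmono : ∀ (r : LC K p hp) (N n : ℕ), N ≤ n → r * P N = 0 → r * P n = 0 := by
    intro r N n hn h
    induction n, hn using Nat.le_induction with
    | base => exact h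
    | succ n _ ih => rw [hPs, ← mul_assoc, ih, zero_mul]
  let J' : Submodule (LC K p hp)ᵐᵒᵖ (LC K p hp) :=
    { carrier := {r | ∃ N, r * P N = 0}
      add_mem' := by
        rintro a b ⟨N, hN⟩ ⟨M, hM⟩
        refine ⟨max N M, ?_⟩
        rw [add_mul, hmono a N _ (le_max_left _ _) hN, hmono b M _ (le_max_right _ _) hM, add_zero]
      zero_mem' := ⟨0, zero_mul _⟩
      smul_mem' := by
        rintro c a ⟨N, hN⟩
        refine ⟨N, ?_⟩
        change a * c.unop * P N = 0
        rw [mul_right_comm, hN, zero_mul] }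
  have hJ : J ≤ J' := hgen J' fun i => ⟨i + 1, by
    rw [hPs]
    have := hid i
    linear_combination (-P i) * this⟩
  refine ⟨fun n => e n * P n, fun i => mem_mul J (he i) _, fun r hr => ?_⟩
  obtain ⟨N, hN⟩ := hJ hr
  refine ⟨N, fun n hn => ?_, ?_⟩
  · have := hmono r N n hn hN
    linear_combination (e n) * this
  · have tel : ∀ N, ∑ n ∈ Finset.range N, r * (e n * P n) * (e n * P n) = r - r * P N := by
      intro N
      induction N with
      | zero => simp [P]
      | succ N ih =>
        rw [Finset.sum_range_succ, ih, hPs]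
        have h1 := hid N
        have h2 := hP2 N
        linear_combination (r * P N * P N) * h1 + (r * e N) * h2
    rw [tel, hN, sub_zero]

theorem proj_right {T : Ordinal.{u}} (hT : Set.range p = Set.Ioc 0 T)
    (J : Submodule (LC K p hp)ᵐᵒᵖ (LC K p hp)) : Module.Projective (LC K p hp)ᵐᵒᵖ J := by
  obtain ⟨f, hf, h⟩ := exists_orth hT J
  refine proj_of (M := J) (fun n =>
    { toFun := fun x : J => MulOpposite.op (x.1 * f n)
      map_add' := fun x y => by
        rw [← MulOpposite.op_add, ← add_mul]; rfl
      map_smul' := fun c x => by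
        change MulOpposite.op (x.1 * c.unop * f n) = c * MulOpposite.op (x.1 * f n)
        rw [mul_right_comm]; rfl }) (fun n => ⟨f n, hf n⟩) ?_
  intro x
  obtain ⟨N, hN, hx⟩ := h x.1 x.2
  refine ⟨N, fun n hn => congrArg MulOpposite.op (hN n hn), Subtype.ext ?_⟩
  rw [AddSubmonoidClass.coe_finsetSum]
  refine hx.trans (Finset.sum_congr rfl fun n _ => ?_)
  exact mul_comm _ _

theorem proj_left {T : Ordinal.{u}} (hT : Set.range p = Set.Ioc 0 T)
    (J : Ideal (LC K p hp)) : Module.Projective (LC K p hp) J := by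
  let J' : Submodule (LC K p hp)ᵐᵒᵖ (LC K p hp) :=
    { carrier := J
      add_mem' := J.add_mem
      zero_mem' := J.zero_mem
      smul_mem' := fun c x hx => J.mul_mem_right c.unop hx }
  obtain ⟨f, hf, h⟩ := exists_orth hT J'
  refine proj_of (M := J) (fun n =>
    { toFun := fun x : J => x.1 * f n
      map_add' := fun x y => add_mul _ _ _
      map_smul' := fun c x => mul_assoc c x.1 (f n) }) (fun n => ⟨f n, hf n⟩) ?_
  intro x
  obtain ⟨N, hN, hx⟩ := h x.1 x.2
  refine ⟨N, fun n hn => hN n hn, Subtype.ext ?_⟩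
  rw [AddSubmonoidClass.coe_finsetSum]
  exact hx

theorem exists_countable_span {R : Type u} [Ring R]
    (J : Submodule Rᵐᵒᵖ R) (L : Submodule Rᵐᵒᵖ J)
    (e : ℕ → R) (he : ∀ i, e i ∈ J)
    (hgen : ∀ J' : Submodule Rᵐᵒᵖ R, (∀ i, e i ∈ J') → J ≤ J') :
    ∃ S : Set (J ⧸ L), S.Countable ∧ Submodule.span Rᵐᵒᵖ S = ⊤ := by
  let e' : ℕ → J := fun i => ⟨e i, he i⟩
  have h1 : span Rᵐᵒᵖ (Set.range e') = ⊤ := by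
    rw [eq_top_iff]
    rintro ⟨x, hx⟩ -
    obtain ⟨y, hy, hyx⟩ := hgen ((span Rᵐᵒᵖ (Set.range e')).map J.subtype)
      (fun i => ⟨e' i, subset_span ⟨i, rfl⟩, rfl⟩) hx
    have : y = ⟨x, hx⟩ := Subtype.ext hyx
    rwa [this] at hy
  refine ⟨Set.image L.mkQ (Set.range e'), (Set.countable_range e').image _, ?_⟩
  rw [span_image, h1, Submodule.map_top, range_mkQ]
end
end LW

namespace LW
section

theorem hasPFA_comm (R : Type u) [CommRing R] : HasPFA R := by
  intro M _ _ hM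
  have := hM.nontrivial
  obtain ⟨m, hm⟩ := exists_ne (0 : M)
  let φ : R →ₗ[Rᵐᵒᵖ] M :=
    { toFun := fun r => MulOpposite.op r • m
      map_add' := fun a b => by rw [MulOpposite.op_add, add_smul]
      map_smul' := fun c a => by
        change MulOpposite.op (a * c.unop) • m = c • MulOpposite.op a • m
        rw [← mul_smul]; rfl }
  have hφ : ∀ r, φ r = MulOpposite.op r • m := fun r => rfl
  have hsurj : LinearMap.range φ = ⊤ := by
    rcases eq_bot_or_eq_top (LinearMap.range φ) with h | h
    · exfalso
      have : φ 1 ∈ LinearMap.range φ := ⟨1, rfl⟩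
      rw [h, Submodule.mem_bot, hφ, MulOpposite.op_one, one_smul] at this
      exact hm this
    · exact h
  have hker : rightAnnihilator R M = LinearMap.ker φ := by
    ext r
    constructor
    · intro h; exact h m
    · intro h x
      have : x ∈ LinearMap.range φ := hsurj ▸ Submodule.mem_top
      obtain ⟨s, rfl⟩ := this
      have h' : MulOpposite.op r • m = 0 := h
      rw [hφ, ← mul_smul, ← MulOpposite.op_mul, mul_comm, MulOpposite.op_mul, mul_smul, h',
        smul_zero]
  rw [hker]
  have e := φ.quotKerEquivRange
  rw [hsurj] at e
  have : IsArtinian Rᵐᵒᵖ M := inferInstance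
  have h2 : IsArtinian Rᵐᵒᵖ (⊤ : Submodule Rᵐᵒᵖ M) := inferInstance
  exact isArtinian_of_linearEquiv e.symm

theorem seq_zero (R : Type u) [Ring R] : socleSeq R 0 = ⊥ := by
  unfold socleSeq
  exact Ordinal.limitRecOn_zero ..

theorem seq_succ (R : Type u) [Ring R] (o : Ordinal.{u}) : socleSeq R (o + 1) =
    Submodule.comap (socleSeq R o).mkQ (moduleSocle Rᵐᵒᵖ (R ⧸ socleSeq R o)) := by
  unfold socleSeq
  rw [Ordinal.limitRecOn_add_one]

theorem seq_limit (R : Type u) [Ring R] (o : Ordinal.{u}) (ho : Order.IsSuccLimit o) :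
    socleSeq R o = ⨆ (β : Ordinal.{u}) (_ : β < o), socleSeq R β := by
  unfold socleSeq
  rw [Ordinal.limitRecOn_limit (h := ho)]

variable {K : Type u} [Field K] {p : ℕ → Ordinal.{u}} {hp : ∀ n, 0 < p n}

theorem seq_eq {T : Ordinal.{u}} (hT : Set.range p = Set.Ioc 0 T)
    (v : Ordinal.{u} → Ordinal.{u})
    (hA : ∀ x, 0 < x → ∃ a < x, ∀ y, a < y → y < x → v y < v x)
    (hB : ∀ x b a : Ordinal.{u}, a < x → b < v x → ∃ y, a < y ∧ y < x ∧ b ≤ v y)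
    (o : Ordinal.{u}) : socleSeq (LC K p hp) o = I K p hp v o := by
  induction o using Ordinal.limitRecOn with
  | zero =>
    rw [seq_zero, eq_comm, eq_bot_iff]
    intro f hf
    exact (Submodule.mem_bot _).2 (LC_ext fun m => hf m zero_le)
  | add_one o ih =>
    rw [seq_succ, ih]
    exact socle_step hT v hA hB o
  | limit o ho ih =>
    rw [seq_limit _ _ ho, ← I_limit hT v hA o ho]
    exact iSup_congr fun β => iSup_congr fun hβ => ih β hβ

theorem vn : IsVNRegular (LC K p hp) := by
  intro r
  refine ⟨⟨fun n => (r.1 n)⁻¹, fun n => ?_⟩, LC_ext fun n => ?_⟩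
  · obtain ⟨a, ha, h⟩ := LC_loc r n
    exact ⟨a, ha, fun m h1 h2 => congrArg _ (h m h1 h2)⟩
  · exact mul_inv_mul_cancel (r.1 n)

theorem semiart {T : Ordinal.{u}} (hT : Set.range p = Set.Ioc 0 T) :
    IsRightSemiartinian (LC K p hp) := by
  intro J hJ hbot
  let B : Set Ordinal.{u} := {x | ∃ n, p n = x ∧ ∀ g ∈ J, g.1 n = 0}
  have hne : B.Nonempty := by
    by_contra hB
    apply hJ
    rw [eq_top_iff]
    intro f _
    refine crit hT J f fun n _ => ?_
    by_contra! h
    exact hB ⟨p n, n, rfl, h⟩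
  obtain ⟨x, ⟨n, rfl, hn⟩, hmin⟩ := WellFounded.has_min wellFounded_lt B hne
  have hmem := mem_socle J (E K p hp 0 (p n)) (fun r => ⟨r.1 n, by
    refine crit hT J _ fun m hm => ?_
    by_contra! hg
    have h1 := hmin (p m) ⟨m, rfl, hg⟩
    apply hm
    rw [sub_val, mul_val, mul_val, C_val]
    rcases (not_lt.1 h1).eq_or_lt with h2 | h2
    · obtain ⟨b, hb, hr⟩ := LC_loc r n
      rw [hr m (h2 ▸ hb) h2.symm.le, sub_self]
    · rw [E_neg2 h2]; simp⟩)
  rw [hbot, Submodule.mem_bot] at hmem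
  have := hn _ ((Submodule.Quotient.mk_eq_zero _).1 hmem)
  rw [E_pos (hp n) le_rfl] at this
  exact one_ne_zero this

/-- The layer at the top. -/
theorem top_layer {R : Type u} [Ring R] (ev : R →+* K) (hsurj : Function.Surjective ev)
    (α : Ordinal.{u}) (h1 : ∀ x, x ∈ socleSeq R (α + 1))
    (h0 : ∀ x, x ∈ socleSeq R α ↔ ev x = 0) :
    ∃ φ : Layer R α ≃+ K, RespectsLayerMul R α φ := by
  let f : socleSeq R (α + 1) →+ K := ev.toAddMonoidHom.comp (socleSeq R (α + 1)).subtype.toAddMonoidHom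
  have hf : ∀ x, f x = ev x.1 := fun x => rfl
  let g : Layer R α →+ K := QuotientAddGroup.lift (layerKer R α).toAddSubgroup f (fun x hx => (h0 _).1 hx)
  have hg : ∀ x, g (Submodule.Quotient.mk x) = ev x.1 := fun x => rfl
  have hbij : Function.Bijective g := by
    constructor
    · rw [injective_iff_map_eq_zero]
      intro a ha
      obtain ⟨x, rfl⟩ := Submodule.Quotient.mk_surjective _ a
      rw [hg] at ha
      exact (Submodule.Quotient.mk_eq_zero _).2 ((h0 _).2 ha)
    · intro c
      obtain ⟨x, hx⟩ := hsurj c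
      exact ⟨Submodule.Quotient.mk ⟨x, h1 x⟩, hx⟩
  refine ⟨AddEquiv.ofBijective g hbij, fun x y => ?_⟩
  rw [AddEquiv.ofBijective_apply, AddEquiv.ofBijective_apply, AddEquiv.ofBijective_apply]
  rw [hg, hg, hg]
  exact map_mul ev x.1 y.1

end
end LW

/-- Example 10 of the paper: for every countable ordinal
`0 < α < ω₁` there exists a `K`-subalgebra `R_α` of `K^ω` which is a semiartinian von
Neumann regular ring with primitive factors artinian of Loewy length exactly `α + 1`,
all of whose layers `L_β` (`β < α`) are countably generated, whose top layer `L_α` is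
isomorphic to `K` (as a ring without unit), and which is left and right hereditary. -/
theorem exists_hereditary_algebra_of_loewy_length (K : Type u) [Field K]
    (α : Ordinal.{u}) (h0 : 0 < α) (hα : α < (Cardinal.aleph 1).ord) :
    ∃ R' : Subalgebra K (ℕ → K),
      IsVNRegular ↥R' ∧
      IsRightSemiartinian ↥R' ∧
      HasPFA ↥R' ∧
      IsLeast {o : Ordinal.{u} | socleSeq ↥R' o = ⊤} (α + 1) ∧
      (∀ β : Ordinal.{u}, β < α →
        ∃ S : Set (Layer ↥R' β), S.Countable ∧ Submodule.span (↥R')ᵐᵒᵖ S = ⊤) ∧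
      (∃ φ : Layer ↥R' α ≃+ K, RespectsLayerMul ↥R' α φ) ∧
      (∀ I : Submodule (↥R')ᵐᵒᵖ ↥R', Module.Projective (↥R')ᵐᵒᵖ ↥I) ∧
      (∀ I : Ideal ↥R', Module.Projective ↥R' ↥I) := by
  obtain ⟨p, hT⟩ := LW.exists_enum α hα
  have hmem : ∀ n, p n ∈ Set.Ioc 0 (Ordinal.omega0 ^ α) := fun n => hT ▸ ⟨n, rfl⟩
  have hp : ∀ n, 0 < p n := fun n => (hmem n).1
  obtain ⟨t, ht⟩ : Ordinal.omega0 ^ α ∈ Set.range p :=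
    hT ▸ ⟨Ordinal.opow_pos _ Ordinal.omega0_pos, le_rfl⟩
  have hrt : LW.rk (p t) = α := by rw [ht, LW.rk_opow]
  have hseq := LW.seq_eq (K := K) (hp := hp) hT LW.rk LW.rk_A (fun x b a h1 h2 => LW.rk_B h1 h2)
  have hrk : ∀ n, LW.rk (p n) ≤ α := by
    intro n
    rcases (hmem n).2.eq_or_lt with h | h
    · rw [h, LW.rk_opow]
    · exact (LW.rk_lt α _ (hp n) h).le
  have htop : ∀ x, x ∈ socleSeq (LW.LC K p hp) (α + 1) := by
    intro x
    rw [hseq]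
    intro n hn
    exact absurd (Order.add_one_le_iff.1 hn) (not_lt.2 (hrk n))
  refine ⟨LW.LC K p hp, LW.vn, LW.semiart hT, LW.hasPFA_comm _, ⟨?_, ?_⟩, ?_, ?_,
    LW.proj_right hT, LW.proj_left hT⟩
  · exact eq_top_iff.2 fun x _ => htop x
  · intro o ho
    by_contra! hlt
    have h1 : (1 : LW.LC K p hp) ∈ socleSeq (LW.LC K p hp) o := by
      rw [show socleSeq (LW.LC K p hp) o = ⊤ from ho]; exact Submodule.mem_top
    rw [hseq] at h1
    have := h1 t (hrt ▸ Order.lt_add_one_iff.1 hlt)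
    exact one_ne_zero this
  · intro β _
    obtain ⟨e, he, -, hgen⟩ := LW.exists_gen hT (socleSeq (LW.LC K p hp) (β + 1))
    exact LW.exists_countable_span _ _ e he hgen
  · refine LW.top_layer ((Pi.evalRingHom (fun _ => K) t).comp (LW.LC K p hp).val.toRingHom)
      (fun c => ⟨LW.C K p hp c, rfl⟩) α htop fun x => ?_
    rw [hseq]
    constructor
    · intro h; exact h t hrt.ge
    · intro h n hn
      have h2 : p n = p t := by
        rcases (hmem n).2.eq_or_lt with h | h
        · rw [h, ht]
        · exact absurd (LW.rk_lt α _ (hp n) h) (not_lt.2 hn)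
      obtain ⟨b, hb, hr⟩ := LW.LC_loc x t
      rw [hr n (h2 ▸ hb) h2.le]
      exact h
end

section
/- Let R be a semiartinian von Neumann regular ring with primitive factors artinian such that σ is a countable ordinal and all proper layers of R are countably generated. Then there exist a right R-module B which is a countable direct product of right ideals of R, an injective right R-module N, and an epimorphism π : B → N such that for every right R-module M the following are equivalent: (1) M is weakly R-projective; (2) the induced map Hom_R(M, π) : Hom_R(M, B) → Hom_R(M, N) is surjective. -/
set_option synthInstance.maxHeartbeats 1000000
set_option maxHeartbeats 2000000


universe u

open Submodule Function

/-- The property of `(I, N)` asserted in Lemma 11 of the paper: `N` is injective and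
there is an epimorphism `π : B → N` from the countable product `B = ∏_{n<ω} I n` of
right ideals such that a module `M` is weakly `R`-projective iff the induced map
`Hom(M, B) → Hom(M, N)` is surjective. -/
def IsWeakProjectivityTest (R : Type u) [Ring R] (σ : Ordinal.{u})
    (I : ℕ → Submodule Rᵐᵒᵖ R) (N : Type u) [AddCommGroup N] [Module Rᵐᵒᵖ N] : Prop :=
  Module.Injective Rᵐᵒᵖ N ∧
  ∃ π : ((n : ℕ) → ↥(I n)) →ₗ[Rᵐᵒᵖ] N, Function.Surjective π ∧
    ∀ (M : Type u) [AddCommGroup M] [Module Rᵐᵒᵖ M],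
      (WeaklyRProjective R σ M ↔
        Function.Surjective fun g : M →ₗ[Rᵐᵒᵖ] ((n : ℕ) → ↥(I n)) => π ∘ₗ g)

/-- For a simple right module `T` over a ring with pfa, `R / ann T` is semisimple. -/
theorem semisimple_quot_ann (R : Type u) [Ring R] (hpfa : HasPFA R)
    (T : Type u) [AddCommGroup T] [Module Rᵐᵒᵖ T] [hT : IsSimpleModule Rᵐᵒᵖ T] :
    IsSemisimpleModule Rᵐᵒᵖ (R ⧸ rightAnnihilator R T) := by
  have := hpfa T hT
  rw [IsArtinian.isSemisimpleModule_iff_jacobson, eq_bot_iff]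
  intro x hx
  obtain ⟨r, rfl⟩ := Submodule.Quotient.mk_surjective _ x
  rw [Submodule.mem_bot, Submodule.Quotient.mk_eq_zero]
  intro t
  by_cases ht : t = 0
  · rw [ht, smul_zero]
  let φ : R →ₗ[Rᵐᵒᵖ] T :=
    { toFun := fun r => MulOpposite.op r • t
      map_add' := fun a b => by rw [MulOpposite.op_add, add_smul]
      map_smul' := fun c a => by
        rw [MulOpposite.smul_eq_mul_unop, MulOpposite.op_mul, MulOpposite.op_unop, mul_smul]
        rfl }
  let ψ : (R ⧸ rightAnnihilator R T) →ₗ[Rᵐᵒᵖ] T :=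
    (rightAnnihilator R T).liftQ φ (fun r hr => hr t)
  have hψ : ψ ≠ 0 := by
    intro h
    apply ht
    have h1 : ψ (Submodule.Quotient.mk 1) = 0 := by rw [h]; rfl
    have h2 : ψ (Submodule.Quotient.mk 1) = MulOpposite.op (1 : R) • t := rfl
    rw [h2, MulOpposite.op_one, one_smul] at h1
    exact h1
  have hco := LinearMap.isCoatom_ker_of_surjective (LinearMap.surjective_of_ne_zero hψ)
  rw [Module.jacobson, Submodule.mem_sInf] at hx
  exact hx _ hco

/-- Simple right modules over a regular ring with pfa are injective. -/
theorem simple_injective (R : Type u) [Ring R] (hvnr : IsVNRegular R) (hpfa : HasPFA R)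
    (T : Type u) [AddCommGroup T] [Module Rᵐᵒᵖ T] [hT : IsSimpleModule Rᵐᵒᵖ T] :
    Module.Injective Rᵐᵒᵖ T := by
  have hss := semisimple_quot_ann R hpfa T
  apply Module.Baer.injective
  intro J h
  let u : Rᵐᵒᵖ →ₗ[Rᵐᵒᵖ] R :=
    { toFun := MulOpposite.unop
      map_add' := fun a b => rfl
      map_smul' := fun c a => by
        rw [MulOpposite.smul_eq_mul_unop, smul_eq_mul, MulOpposite.unop_mul]; rfl }
  let v : Rᵐᵒᵖ →ₗ[Rᵐᵒᵖ] (R ⧸ rightAnnihilator R T) := (rightAnnihilator R T).mkQ ∘ₗ u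
  let φ := v ∘ₗ J.subtype
  have hker : LinearMap.ker φ ≤ LinearMap.ker h := by
    rintro ⟨x, hx⟩ hxk
    have hx0 : x.unop ∈ rightAnnihilator R T := by
      rw [LinearMap.mem_ker] at hxk
      exact (Submodule.Quotient.mk_eq_zero _).1 hxk
    obtain ⟨s, hs⟩ := hvnr x.unop
    have hxx : (⟨x, hx⟩ : J) = (x * MulOpposite.op s) • (⟨x, hx⟩ : J) := by
      apply Subtype.ext
      apply MulOpposite.unop_injective
      simp only [SetLike.val_smul, smul_eq_mul, MulOpposite.unop_mul, MulOpposite.unop_op]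
      rw [← mul_assoc]; exact hs.symm
    rw [LinearMap.mem_ker, hxx, map_smul, mul_smul]
    exact hx0 _
  let q := (LinearMap.ker φ).liftQ h hker
  let h1 : LinearMap.range φ →ₗ[Rᵐᵒᵖ] T := q ∘ₗ φ.quotKerEquivRange.symm.toLinearMap
  obtain ⟨p, hp⟩ := IsSemisimpleModule.extension_property (LinearMap.range φ).subtype
    (Submodule.subtype_injective _) h1
  refine ⟨p ∘ₗ v, fun x hx => ?_⟩
  have h2 : p (φ ⟨x, hx⟩) = h1 ⟨φ ⟨x, hx⟩, LinearMap.mem_range_self _ _⟩ := by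
    rw [← hp]; rfl
  change p (φ ⟨x, hx⟩) = _
  rw [h2]
  have h3 : φ.quotKerEquivRange.symm ⟨φ ⟨x, hx⟩, LinearMap.mem_range_self _ _⟩
      = Submodule.Quotient.mk ⟨x, hx⟩ := by
    rw [LinearEquiv.symm_apply_eq]; rfl
  change q (φ.quotKerEquivRange.symm ⟨φ ⟨x, hx⟩, _⟩) = _
  rw [h3]; rfl

/-- Finitely generated semisimple modules over a regular ring with pfa are injective. -/
theorem fg_semisimple_injective (R : Type u) [Ring R] (hvnr : IsVNRegular R) (hpfa : HasPFA R)
    (T : Type u) [AddCommGroup T] [Module Rᵐᵒᵖ T] [IsSemisimpleModule Rᵐᵒᵖ T]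
    [Module.Finite Rᵐᵒᵖ T] : Module.Injective Rᵐᵒᵖ T := by
  obtain ⟨n, S, e, hS⟩ := IsSemisimpleModule.exists_linearEquiv_fin_dfinsupp Rᵐᵒᵖ T
  have : ∀ i, Module.Injective Rᵐᵒᵖ (S i) := fun i => by
    have := hS i
    exact simple_injective R hvnr hpfa _
  have hp : Module.Injective Rᵐᵒᵖ (∀ i, S i) := inferInstance
  rw [← Module.Baer.iff_injective] at hp ⊢
  exact hp.of_equiv ((e.trans DFinsupp.linearEquivFunOnFintype).symm)

theorem socleSeq_add_one (R : Type u) [Ring R] (α : Ordinal.{u}) :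
    socleSeq R (α + 1) =
      Submodule.comap (socleSeq R α).mkQ (moduleSocle Rᵐᵒᵖ (R ⧸ socleSeq R α)) := by
  unfold socleSeq
  rw [Ordinal.limitRecOn_add_one]

theorem moduleSocle_semisimple (A M : Type*) [Ring A] [AddCommGroup M] [Module A M] :
    IsSemisimpleModule A (moduleSocle A M) := by
  unfold moduleSocle
  rw [sSup_eq_iSup]
  refine isSemisimpleModule_biSup_of_isSemisimpleModule_submodule (p := fun W => W) ?_
  intro W hW
  have : IsSimpleModule A W := hW
  infer_instance

theorem layer_semisimple (R : Type u) [Ring R] (α : Ordinal.{u}) :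
    IsSemisimpleModule Rᵐᵒᵖ (Layer R α) := by
  have := moduleSocle_semisimple Rᵐᵒᵖ (R ⧸ socleSeq R α)
  let f : socleSeq R (α + 1) →ₗ[Rᵐᵒᵖ] moduleSocle Rᵐᵒᵖ (R ⧸ socleSeq R α) :=
    ((socleSeq R α).mkQ ∘ₗ (socleSeq R (α + 1)).subtype).codRestrict _ (fun x => by
      exact (socleSeq_add_one R α).le x.2)
  have hf : LinearMap.ker f = layerKer R α := by
    unfold layerKer
    rw [LinearMap.ker_codRestrict, LinearMap.ker_comp, Submodule.ker_mkQ]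
  exact IsSemisimpleModule.of_injective ((layerKer R α).liftQ f hf.ge)
    (LinearMap.ker_eq_bot.1 (Submodule.ker_liftQ_eq_bot _ _ _ hf.le))

/-- A countably generated module is exhausted by a sequence of f.g. submodules. -/
theorem exists_fg_seq (A M : Type*) [Ring A] [AddCommGroup M] [Module A M]
    (h : ∃ S : Set M, S.Countable ∧ Submodule.span A S = ⊤) :
    ∃ T : ℕ → Submodule A M, (∀ j, (T j).FG) ∧ ∀ V : Submodule A M, V.FG → ∃ j, V ≤ T j := by
  obtain ⟨S, hS, hsp⟩ := h
  obtain ⟨e, he⟩ := (hS.insert 0).exists_eq_range (Set.insert_nonempty _ _)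
  let T : ℕ → Submodule A M := fun j => Submodule.span A (e '' Set.Iic j)
  have hmono : Monotone T := fun i j hij =>
    Submodule.span_mono (Set.image_mono (Set.Iic_subset_Iic.2 hij))
  refine ⟨T, fun j => Submodule.fg_span ((Set.finite_Iic j).image e), fun V hV => ?_⟩
  have htop : V ≤ ⨆ j, T j := by
    refine le_top.trans ?_
    rw [← hsp, Submodule.span_le]
    intro x hx
    have : x ∈ Set.range e := he ▸ Set.mem_insert_of_mem _ hx
    obtain ⟨j, rfl⟩ := this
    exact Submodule.mem_iSup_of_mem j (Submodule.subset_span ⟨j, le_refl j, rfl⟩)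
  have hc := (Submodule.fg_iff_compact V).1 hV
  rw [CompleteLattice.isCompactElement_iff_le_of_directed_sSup_le] at hc
  obtain ⟨_, ⟨j, rfl⟩, hj⟩ := hc (Set.range T) (Set.range_nonempty _)
    (directedOn_range.2 (hmono.directed_le)) htop
  exact ⟨j, hj⟩

/-- Lemma 11 of the paper: over a semiartinian von Neumann regular
ring `R` with primitive factors artinian such that `σ` is countable and all proper
layers are countably generated, there is a single epimorphism `π : B → N`, where `B` is
a countable direct product of right ideals of `R` and `N` is injective, testing the weak
`R`-projectivity of every module. -/
theorem exists_weak_projectivity_test (R : Type u) [Ring R]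
    (hsa : IsRightSemiartinian R) (hvnr : IsVNRegular R) (hpfa : HasPFA R)
    (σ : Ordinal.{u}) (hσ : IsLeast {o : Ordinal.{u} | socleSeq R o = ⊤} (σ + 1))
    (hσc : σ.card ≤ Cardinal.aleph0)
    (hlayers : ∀ α : Ordinal.{u}, 0 < α → α < σ →
      ∃ S : Set (Layer R α), S.Countable ∧ Submodule.span Rᵐᵒᵖ S = ⊤) :
    ∃ (I : ℕ → Submodule Rᵐᵒᵖ R) (N : Type u) (i₁ : AddCommGroup N)
      (i₂ : @Module Rᵐᵒᵖ N _ i₁.toAddCommMonoid),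
      @IsWeakProjectivityTest R _ σ I N i₁ i₂ := by
  have hseq : ∀ α : Set.Iic σ, ∃ T : ℕ → Submodule Rᵐᵒᵖ (Layer R α.1), (∀ j, (T j).FG) ∧
      (0 < α.1 → ∀ V : Submodule Rᵐᵒᵖ (Layer R α.1), V.FG → ∃ j, V ≤ T j) ∧
      (¬ 0 < α.1 → ∀ j, T j = ⊥) := by
    rintro ⟨α, hα⟩
    by_cases h0 : 0 < α
    · have hcg : ∃ S : Set (Layer R α), S.Countable ∧ Submodule.span Rᵐᵒᵖ S = ⊤ := by
        rcases lt_or_eq_of_le (show α ≤ σ from hα) with h | rfl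
        · exact hlayers α h0 h
        · have htop : socleSeq R (α + 1) = ⊤ := hσ.1
          refine ⟨{Submodule.Quotient.mk ⟨1, htop ▸ Submodule.mem_top⟩},
            Set.countable_singleton _, ?_⟩
          rw [eq_top_iff]
          intro x _
          obtain ⟨⟨r, hr⟩, rfl⟩ := Submodule.Quotient.mk_surjective _ x
          rw [Submodule.mem_span_singleton]
          refine ⟨MulOpposite.op r, ?_⟩
          rw [← Submodule.Quotient.mk_smul]
          congr 1
          apply Subtype.ext
          simp
      obtain ⟨T, h1, h2⟩ := exists_fg_seq _ _ hcg
      exact ⟨T, h1, fun _ => h2, fun h => absurd h0 h⟩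
    · exact ⟨fun _ => ⊥, fun _ => Submodule.fg_bot, fun h => absurd h h0, fun _ _ => rfl⟩
  choose T hTfg hTcof hTbot using hseq
  have hcount : Countable (Set.Iic σ) := by
    have h1 : (Set.Iio σ).Countable := by
      rw [← Cardinal.le_aleph0_iff_set_countable, Cardinal.mk_Iio_ordinal]
      rw [← Cardinal.lift_aleph0.{u+1, u}]
      exact Cardinal.lift_le.2 hσc
    have : (Set.Iic σ).Countable := by
      rw [← Set.Iio_insert]
      exact h1.insert _
    exact this.to_subtype
  have hne : Nonempty (Set.Iic σ × ℕ) := ⟨(⟨σ, le_refl σ⟩, 0)⟩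
  obtain ⟨e, he⟩ := exists_surjective_nat (Set.Iic σ × ℕ)
  let I' : (Set.Iic σ × ℕ) → Submodule Rᵐᵒᵖ R := fun p =>
    ((T p.1 p.2).comap (layerKer R p.1.1).mkQ).map (socleSeq R (p.1.1 + 1)).subtype
  have hI' : ∀ p, I' p ≤ socleSeq R (p.1.1 + 1) := fun p => Submodule.map_subtype_le _ _
  let ψ : ∀ p, I' p →ₗ[Rᵐᵒᵖ] T p.1 p.2 := fun p =>
    ((layerKer R p.1.1).mkQ ∘ₗ Submodule.inclusion (hI' p)).codRestrict _ (by
      rintro ⟨_, y, hy, rfl⟩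
      exact hy)
  have hψ : ∀ p, Function.Surjective (ψ p) := by
    rintro p ⟨t, ht⟩
    obtain ⟨y, rfl⟩ := Submodule.Quotient.mk_surjective _ t
    exact ⟨⟨y.1, y, ht, rfl⟩, rfl⟩
  have hinj : ∀ p : Set.Iic σ × ℕ, Module.Injective Rᵐᵒᵖ (T p.1 p.2) := fun p => by
    have := layer_semisimple R p.1.1
    have : Module.Finite Rᵐᵒᵖ (T p.1 p.2) := Module.Finite.iff_fg.2 (hTfg p.1 p.2)
    exact fg_semisimple_injective R hvnr hpfa _
  refine ⟨fun n => I' (e n), (∀ n, T (e n).1 (e n).2), 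
    @Pi.addCommGroup ℕ _ (fun n => (T (e n).1 (e n).2).addCommGroup),
    @Pi.module ℕ _ _ _ _ (fun n => (T (e n).1 (e n).2).module), ?_, ?_⟩
  · have := fun n => hinj (e n)
    infer_instance
  let π : (∀ n, I' (e n)) →ₗ[Rᵐᵒᵖ] (∀ n, T (e n).1 (e n).2) :=
    LinearMap.pi fun n => ψ (e n) ∘ₗ LinearMap.proj n
  refine ⟨π, ?_, ?_⟩
  · intro y
    choose x hx using fun n => hψ (e n) (y n)
    exact ⟨x, funext hx⟩
  intro M _ _
  constructor
  · intro hM f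
    have key : ∀ p (f : M →ₗ[Rᵐᵒᵖ] T p.1 p.2), ∃ g : M →ₗ[Rᵐᵒᵖ] I' p, ψ p ∘ₗ g = f := by
      intro p f
      by_cases h0 : 0 < p.1.1
      · have hfg : (LinearMap.range ((T p.1 p.2).subtype ∘ₗ f)).FG := by
          have := layer_semisimple R p.1.1
          have : Module.Finite Rᵐᵒᵖ (T p.1 p.2) := Module.Finite.iff_fg.2 (hTfg p.1 p.2)
          rw [LinearMap.range_comp]
          exact (IsNoetherian.noetherian (LinearMap.range f)).map _
        obtain ⟨g, hg⟩ := hM p.1.1 h0 p.1.2 ((T p.1 p.2).subtype ∘ₗ f) hfg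
        have hg' : ∀ m, (layerKer R p.1.1).mkQ (g m) = (f m : Layer R p.1.1) :=
          fun m => LinearMap.congr_fun hg m
        refine ⟨((socleSeq R (p.1.1 + 1)).subtype ∘ₗ g).codRestrict _
          (fun m => ⟨g m, ?_, rfl⟩), ?_⟩
        · change (layerKer R p.1.1).mkQ (g m) ∈ T p.1 p.2
          rw [hg']
          exact (f m).2
        · ext m
          exact hg' m
      · refine ⟨0, ?_⟩
        ext m
        have h1 := (f m).2
        have h2 := hTbot p.1 h0 p.2
        have h3 : (f m : Layer R p.1.1) = 0 := by
          rw [← Submodule.mem_bot Rᵐᵒᵖ, ← h2]; exact h1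
        rw [h3]; simp
    choose g hg using fun n => key (e n) (LinearMap.proj n ∘ₗ f)
    refine ⟨LinearMap.pi g, ?_⟩
    refine LinearMap.ext fun m => funext fun n => ?_
    exact LinearMap.congr_fun (hg n) m
  · intro hM α h0 hα f hf
    obtain ⟨j, hj⟩ := hTcof ⟨α, hα⟩ h0 _ hf
    obtain ⟨n, hn⟩ := he (⟨α, hα⟩, j)
    have hfT : ∀ m, f m ∈ T ⟨α, hα⟩ j := fun m => hj (LinearMap.mem_range_self f m)
    have key : ∀ p, p = e n → ∀ f : M →ₗ[Rᵐᵒᵖ] T p.1 p.2,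
        ∃ g : M →ₗ[Rᵐᵒᵖ] I' p, ψ p ∘ₗ g = f := by
      rintro _ rfl f
      classical
      obtain ⟨g, hg⟩ := hM (LinearMap.single Rᵐᵒᵖ (fun n => T (e n).1 (e n).2) n ∘ₗ f)
      refine ⟨LinearMap.proj n ∘ₗ g, LinearMap.ext fun m => ?_⟩
      have h1 := congrFun (LinearMap.congr_fun hg m) n
      have h2 : (LinearMap.single Rᵐᵒᵖ (fun n => T (e n).1 (e n).2) n ∘ₗ f) m n = f m := by
        simp
      exact h1.trans h2
    obtain ⟨g, hg⟩ := key (⟨α, hα⟩, j) hn.symm (f.codRestrict _ hfT)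
    refine ⟨Submodule.inclusion (hI' (⟨α, hα⟩, j)) ∘ₗ g, LinearMap.ext fun m => ?_⟩
    exact congrArg Subtype.val (LinearMap.congr_fun hg m)
end

section
/- Let R be a semiartinian von Neumann regular ring with primitive factors artinian such that σ is a countable ordinal and all proper layers of R are countably generated. If a right R-module M is not weakly R-projective, then there exist α ≤ σ and a finite subset F of λ_α such that, with N_{α,F} the right ideal satisfying S_α ⊆ N_{α,F} ⊆ S_{α+1} and N_{α,F}/S_α ≅ ⊕_{β∈F} M_{n_{αβ}}(K_{αβ}) (which is an injective module), the induced map Hom_R(M, π_α↾N_{α,F}) : Hom_R(M, N_{α,F}) → Hom_R(M, N_{α,F}/S_α) is not surjective. -/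
set_option synthInstance.maxHeartbeats 1000000
set_option maxHeartbeats 2000000


universe u

open Submodule Function

/-- A submodule `H` of a right module `M` is a homogeneous component if it is the sum of
all submodules isomorphic to some fixed simple submodule `T` of `M`. -/
def IsHomogeneousComponent (R : Type u) [Ring R] (M : Type u) [AddCommGroup M]
    [Module Rᵐᵒᵖ M] (H : Submodule Rᵐᵒᵖ M) : Prop :=
  ∃ T : Submodule Rᵐᵒᵖ M, IsSimpleModule Rᵐᵒᵖ ↥T ∧
    H = sSup {W : Submodule Rᵐᵒᵖ M | Nonempty (↥W ≃ₗ[Rᵐᵒᵖ] ↥T)}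

/-- Baer criterion for a module over a von Neumann regular ring whose annihilator has a
semisimple factor. -/
theorem baer_of_semisimple_quot {A : Type u} [Ring A] (hA : IsVNRegular A)
    {H : Type u} [AddCommGroup H] [Module A H]
    (hs : IsSemisimpleModule A (A ⧸ Module.annihilator A H)) : Module.Baer A H := by
  intro I g
  let q : I →ₗ[A] (A ⧸ Module.annihilator A H) :=
    (Submodule.mkQ (Module.annihilator A H)) ∘ₗ I.subtype
  have hk : LinearMap.ker q ≤ LinearMap.ker g := by
    rintro ⟨x, hx⟩ hxq
    have hxa : x ∈ Module.annihilator A H := by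
      have h0 : q ⟨x, hx⟩ = 0 := hxq
      exact (Submodule.Quotient.mk_eq_zero _).1 h0
    obtain ⟨s, hsx⟩ := hA x
    have e : (⟨x, hx⟩ : I) = (x * s) • (⟨x, hx⟩ : I) := Subtype.ext hsx.symm
    rw [LinearMap.mem_ker, e, map_smul, mul_smul]
    exact Module.mem_annihilator.1 hxa _
  have hinj : Function.Injective ((LinearMap.ker q).liftQ q le_rfl) := by
    rw [← LinearMap.ker_eq_bot]
    exact Submodule.ker_liftQ_eq_bot _ _ _ le_rfl
  obtain ⟨h', hh'⟩ := IsSemisimpleModule.extension_property _ hinj ((LinearMap.ker q).liftQ g hk)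
  refine ⟨h' ∘ₗ Submodule.mkQ _, fun x mem => ?_⟩
  have := LinearMap.congr_fun hh' (Submodule.Quotient.mk ⟨x, mem⟩)
  exact this

theorem semisimple_quot_mono {A : Type u} [Ring A] {K L : Submodule A A} (h : K ≤ L)
    (hs : IsSemisimpleModule A (A ⧸ K)) : IsSemisimpleModule A (A ⧸ L) :=
  IsSemisimpleModule.of_surjective (Submodule.factor h) (Submodule.factor_surjective h)

theorem semisimple_quot_inf {A : Type u} [Ring A] {K L : Submodule A A}
    (hK : IsSemisimpleModule A (A ⧸ K)) (hL : IsSemisimpleModule A (A ⧸ L)) :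
    IsSemisimpleModule A (A ⧸ (K ⊓ L)) := by
  let B : Bool → Submodule A A := fun b => cond b K L
  have hB : ∀ b, IsSemisimpleModule A (A ⧸ B b) := by
    rintro (_ | _)
    · exact hL
    · exact hK
  have hle : ∀ b, K ⊓ L ≤ B b := by
    rintro (_ | _)
    · exact inf_le_right
    · exact inf_le_left
  refine IsSemisimpleModule.of_injective (M := ∀ b, A ⧸ B b)
    (LinearMap.pi fun b => Submodule.factor (hle b)) ?_
  rw [← LinearMap.ker_eq_bot, LinearMap.ker_eq_bot']
  intro m
  obtain ⟨a, rfl⟩ := Submodule.Quotient.mk_surjective _ m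
  intro h
  have h1 : (Submodule.Quotient.mk a : A ⧸ K) = 0 := congrFun h true
  have h2 : (Submodule.Quotient.mk a : A ⧸ L) = 0 := congrFun h false
  exact (Submodule.Quotient.mk_eq_zero _).2
    ⟨(Submodule.Quotient.mk_eq_zero _).1 h1, (Submodule.Quotient.mk_eq_zero _).1 h2⟩

/-- `r ↦ op r` as a map of right modules. -/
def opEquivRight (R : Type u) [Ring R] : R ≃ₗ[Rᵐᵒᵖ] Rᵐᵒᵖ :=
  { MulOpposite.opAddEquiv with
    map_smul' := fun c r => by
      change MulOpposite.op (c • r) = c * MulOpposite.op r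
      rw [MulOpposite.smul_eq_mul_unop, MulOpposite.op_mul, MulOpposite.op_unop] }

theorem semisimple_quot_simple (R : Type u) [Ring R] (hpfa : HasPFA R)
    (T : Type u) [AddCommGroup T] [Module Rᵐᵒᵖ T] (hT : IsSimpleModule Rᵐᵒᵖ T) :
    IsSemisimpleModule Rᵐᵒᵖ (Rᵐᵒᵖ ⧸ Module.annihilator Rᵐᵒᵖ T) := by
  have h1 := hpfa T hT
  have hmap : (rightAnnihilator R T).map (opEquivRight R : R →ₗ[Rᵐᵒᵖ] Rᵐᵒᵖ)
      = Module.annihilator Rᵐᵒᵖ T := by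
    ext x
    constructor
    · rintro ⟨r, hr, rfl⟩
      exact Module.mem_annihilator.2 hr
    · intro hx
      exact ⟨x.unop, Module.mem_annihilator.1 hx, rfl⟩
  have e := Submodule.Quotient.equiv _ _ (opEquivRight R) hmap
  have h2 : IsArtinian Rᵐᵒᵖ (Rᵐᵒᵖ ⧸ Module.annihilator Rᵐᵒᵖ T) := e.isArtinian_iff.1 h1
  rw [IsArtinian.isSemisimpleModule_iff_jacobson, eq_bot_iff]
  intro y hy
  obtain ⟨a, rfl⟩ := Submodule.Quotient.mk_surjective _ y
  refine (Submodule.mem_bot _).2 ((Submodule.Quotient.mk_eq_zero _).2 (Module.mem_annihilator.2 ?_))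
  intro m
  let f : (Rᵐᵒᵖ ⧸ Module.annihilator Rᵐᵒᵖ T) →ₗ[Rᵐᵒᵖ] T :=
    Submodule.liftQ _ (LinearMap.toSpanSingleton Rᵐᵒᵖ T m) (by
      intro b hb
      exact Module.mem_annihilator.1 hb m)
  exact IsSemisimpleModule.jacobson_le_ker _ _ _ _ f hy

theorem semisimple_quot_homog (R : Type u) [Ring R] (hpfa : HasPFA R)
    (M : Type u) [AddCommGroup M] [Module Rᵐᵒᵖ M] (H : Submodule Rᵐᵒᵖ M)
    (hH : IsHomogeneousComponent R M H) :
    IsSemisimpleModule Rᵐᵒᵖ (Rᵐᵒᵖ ⧸ H.annihilator) := by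
  obtain ⟨T, hT, rfl⟩ := hH
  refine semisimple_quot_mono ?_ (semisimple_quot_simple R hpfa T hT)
  rw [sSup_eq_iSup', Submodule.annihilator_iSup]
  refine le_iInf ?_
  rintro ⟨W, ⟨e⟩⟩
  exact e.annihilator_eq.ge

theorem semisimple_quot_finset (R : Type u) [Ring R] (hpfa : HasPFA R)
    (M : Type u) [AddCommGroup M] [Module Rᵐᵒᵖ M] (F : Finset (Submodule Rᵐᵒᵖ M))
    (hF : ∀ H ∈ F, IsHomogeneousComponent R M H) :
    IsSemisimpleModule Rᵐᵒᵖ (Rᵐᵒᵖ ⧸ (F.sup id).annihilator) := by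
  classical
  induction F using Finset.induction_on with
  | empty =>
    have : Subsingleton (Rᵐᵒᵖ ⧸ ((∅ : Finset (Submodule Rᵐᵒᵖ M)).sup id).annihilator) := by
      rw [Finset.sup_empty, Submodule.annihilator_bot]
      infer_instance
    exact (isSemisimpleModule_iff _ _).mpr Subsingleton.instComplementedLattice
  | insert H F _ ih =>
    rw [Finset.sup_insert]
    refine semisimple_quot_mono ?_ (semisimple_quot_inf
      (semisimple_quot_homog R hpfa M H (hF H (Finset.mem_insert_self _ _)))
      (ih fun H' h' => hF H' (Finset.mem_insert_of_mem h')))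
    rintro a ⟨h1, h2⟩
    refine Submodule.mem_annihilator.2 fun n hn => ?_
    obtain ⟨x, hx, y, hy, rfl⟩ := Submodule.mem_sup.1 hn
    rw [smul_add, Submodule.mem_annihilator.1 h1 x hx, Submodule.mem_annihilator.1 h2 y hy,
      add_zero]

/-- Remark 12 of the paper: over a semiartinian von Neumann regular
ring with primitive factors artinian such that `σ` is countable and all proper layers
are countably generated, if `M` is not weakly `R`-projective, then there are an
`α ≤ σ` and a finite set `F` of homogeneous components of `Soc(R/S_α)` such that, for
the right ideal `N_{α,F}` with `S_α ⊆ N_{α,F} ⊆ S_{α+1}` and `N_{α,F}/S_α = ⨆ F`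
(an injective module), the induced map
`Hom(M, N_{α,F}) → Hom(M, N_{α,F}/S_α)` is not surjective. -/
theorem not_weaklyRProjective_witness (R : Type u) [Ring R]
    (hsa : IsRightSemiartinian R) (hvnr : IsVNRegular R) (hpfa : HasPFA R)
    (σ : Ordinal.{u}) (hσ : IsLeast {o : Ordinal.{u} | socleSeq R o = ⊤} (σ + 1))
    (hσc : σ.card ≤ Cardinal.aleph0)
    (hlayers : ∀ α : Ordinal.{u}, 0 < α → α < σ →
      ∃ S : Set (Layer R α), S.Countable ∧ Submodule.span Rᵐᵒᵖ S = ⊤)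
    (M : Type u) [AddCommGroup M] [Module Rᵐᵒᵖ M]
    (hM : ¬ WeaklyRProjective R σ M) :
    ∃ α : Ordinal.{u}, α ≤ σ ∧
      ∃ F : Finset (Submodule Rᵐᵒᵖ (R ⧸ socleSeq R α)),
        (∀ H ∈ F, IsHomogeneousComponent R (R ⧸ socleSeq R α) H) ∧
        Module.Injective Rᵐᵒᵖ ↥(F.sup id) ∧
        ∃ NF : Submodule Rᵐᵒᵖ R,
          NF = Submodule.comap (socleSeq R α).mkQ (F.sup id) ∧
          socleSeq R α ≤ NF ∧ NF ≤ socleSeq R (α + 1) ∧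
          ¬ Function.Surjective
            (fun g : M →ₗ[Rᵐᵒᵖ] ↥NF =>
              ((socleSeq R α).comap NF.subtype).mkQ ∘ₗ g) := by
  classical
  unfold WeaklyRProjective at hM
  push Not at hM
  obtain ⟨α, -, hα, f, hf, hno⟩ := hM
  have hop : IsVNRegular Rᵐᵒᵖ := by
    intro r
    obtain ⟨s, hs⟩ := hvnr r.unop
    refine ⟨MulOpposite.op s, MulOpposite.unop_injective ?_⟩
    simpa [mul_assoc] using hs
  refine ⟨α, hα, ?_⟩
  let φ : Layer R α →ₗ[Rᵐᵒᵖ] (R ⧸ socleSeq R α) :=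
    (layerKer R α).liftQ ((socleSeq R α).mkQ ∘ₗ (socleSeq R (α + 1)).subtype) (by
      rintro x hx
      exact (Submodule.Quotient.mk_eq_zero _).2 hx)
  have hφ : Function.Injective φ := by
    rw [← LinearMap.ker_eq_bot, LinearMap.ker_eq_bot']
    intro m
    obtain ⟨a, rfl⟩ := Submodule.Quotient.mk_surjective _ m
    intro h
    exact (Submodule.Quotient.mk_eq_zero _).2
      ((Submodule.Quotient.mk_eq_zero (socleSeq R α)).1 h)
  have hr : LinearMap.range (φ ∘ₗ f) ≤ moduleSocle Rᵐᵒᵖ (R ⧸ socleSeq R α) := by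
    rintro _ ⟨m, rfl⟩
    rw [LinearMap.comp_apply]
    obtain ⟨a, ha⟩ := Submodule.Quotient.mk_surjective _ (f m)
    rw [← ha]
    exact (socleSeq_add_one R α).le a.2
  have hfg : (LinearMap.range (φ ∘ₗ f)).FG := by
    rw [LinearMap.range_comp]
    exact hf.map φ
  obtain ⟨t, ht, htr⟩ := (CompleteLattice.isCompactElement_iff_exists_le_sSup_of_le_sSup _ _).1
    ((Submodule.fg_iff_compact _).1 hfg) _ hr
  let hc : Submodule Rᵐᵒᵖ (R ⧸ socleSeq R α) → Submodule Rᵐᵒᵖ (R ⧸ socleSeq R α) :=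
    fun T => sSup {W | Nonempty (↥W ≃ₗ[Rᵐᵒᵖ] ↥T)}
  have hF : ∀ H ∈ t.image hc, IsHomogeneousComponent R (R ⧸ socleSeq R α) H := by
    intro H hH
    obtain ⟨T, hT, rfl⟩ := Finset.mem_image.1 hH
    exact ⟨T, ht hT, rfl⟩
  have hle : LinearMap.range (φ ∘ₗ f) ≤ (t.image hc).sup id := by
    refine htr.trans (Finset.sup_le fun T hT => ?_)
    refine le_trans ?_ (Finset.le_sup (f := id) (Finset.mem_image_of_mem hc hT))
    exact le_sSup ⟨LinearEquiv.refl _ _⟩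
  have hsoc : (t.image hc).sup id ≤ moduleSocle Rᵐᵒᵖ (R ⧸ socleSeq R α) := by
    refine Finset.sup_le fun H hH => ?_
    obtain ⟨T, hT, rfl⟩ := hF H hH
    refine sSup_le ?_
    rintro W ⟨e⟩
    exact le_sSup (IsSimpleModule.congr e)
  generalize t.image hc = F at hF hle hsoc
  have hN : Submodule.comap (socleSeq R α).mkQ (F.sup id) ≤ socleSeq R (α + 1) := by
    rw [socleSeq_add_one]
    exact Submodule.comap_mono hsoc
  refine ⟨F, hF, Module.Baer.injective (baer_of_semisimple_quot hop
    (semisimple_quot_finset R hpfa _ F hF)), _, rfl, ?_, hN, ?_⟩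
  · intro x hx
    have h0 : (socleSeq R α).mkQ x = 0 := (Submodule.Quotient.mk_eq_zero _).2 hx
    rw [Submodule.mem_comap, h0]
    exact zero_mem _
  · intro hsurj
    let N := Submodule.comap (socleSeq R α).mkQ (F.sup id)
    let ψ : (↥N ⧸ (socleSeq R α).comap N.subtype) →ₗ[Rᵐᵒᵖ] (R ⧸ socleSeq R α) :=
      ((socleSeq R α).comap N.subtype).liftQ ((socleSeq R α).mkQ ∘ₗ N.subtype) (by
        rintro x hx
        exact (Submodule.Quotient.mk_eq_zero _).2 hx)
    have hψ : Function.Injective ψ := by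
      rw [← LinearMap.ker_eq_bot, LinearMap.ker_eq_bot']
      intro m
      obtain ⟨a, rfl⟩ := Submodule.Quotient.mk_surjective _ m
      intro h
      exact (Submodule.Quotient.mk_eq_zero _).2
        ((Submodule.Quotient.mk_eq_zero (socleSeq R α)).1 h)
    have hrange : ∀ m, (φ ∘ₗ f) m ∈ LinearMap.range ψ := by
      intro m
      have h1 : (φ ∘ₗ f) m ∈ F.sup id := hle ⟨m, rfl⟩
      obtain ⟨a, ha⟩ := Submodule.Quotient.mk_surjective _ ((φ ∘ₗ f) m)
      have haN : a ∈ N := by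
        change Submodule.Quotient.mk a ∈ F.sup id
        rw [ha]
        exact h1
      exact ⟨Submodule.Quotient.mk ⟨a, haN⟩, ha⟩
    obtain ⟨g, hg⟩ := hsurj ((LinearEquiv.ofInjective ψ hψ).symm.toLinearMap ∘ₗ
      LinearMap.codRestrict _ (φ ∘ₗ f) hrange)
    refine hno (Submodule.inclusion hN ∘ₗ g) ?_
    ext m
    apply hφ
    have h2 := congrArg ψ (LinearMap.congr_fun hg m)
    have h3 : ψ ((LinearEquiv.ofInjective ψ hψ).symm
        (LinearMap.codRestrict _ (φ ∘ₗ f) hrange m)) = φ (f m) := by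
      have := congrArg Subtype.val ((LinearEquiv.ofInjective ψ hψ).apply_symm_apply
        (LinearMap.codRestrict _ (φ ∘ₗ f) hrange m))
      exact this
    exact h2.trans h3
end
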